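/- arXiv:1804.05559 — 2 statements merged into one kernel-verified Lean document; each statement's English description precedes it below -/
import Mathlib

section
/- Let n ≥ 7 be an integer and let A_{ikjl} and B_{ij} (1 ≤ i,j,k,l ≤ n-1) be real constants satisfying A_{ikjl} = -A_{kijl} and A_{ikjl} = -A_{iklj} for all indices, Σ_{i,k=1}^{n-1} A_{ikik} = 0, and Σ_{i=1}^{n-1} B_{ii} = 0. Then there exist a constant C > 0 and a C² function v on the closed upper half-space {(z,t) : z ∈ ℝ^{n-1}, t ≥ 0} such that: (1) -Δv(y) = f_{A,B}(y) for all y ∈ ℝ^n_+; (2) ∂v/∂t(z,0) = -n · U(z,0)^{2/(n-2)} · v(z,0) for all z ∈ ℝ^{n-1}; (3) |v(y)| ≤ C(1+|y|)^{4-n}, |∇v(y)| ≤ C(1+|y|)^{3-n} and |∇²v(y)| ≤ C(1+|y|)^{2-n} for all y in the closed half-space; (4) ∫_{ℝ^{n-1}} U(z,0)^{n/(n-2)} v(z,0) dz = 0; and (5) ∫_{ℝ^n_+} v(y) Δv(y) dy ≤ 0. -/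
open MeasureTheory

noncomputable section

/-- Points of the upper half-space: a pair `(z, t)` with `z ∈ ℝ^{n-1}`, `t ∈ ℝ`. -/
abbrev Pt (n : ℕ) := EuclideanSpace ℝ (Fin (n - 1)) × ℝ

/-- The standard bubble `U(z,t) = ((1+t)^2 + |z|^2)^{-(n-2)/2}`. -/
def stdBubble (n : ℕ) (p : Pt n) : ℝ :=
  ((1 + p.2) ^ 2 + ‖p.1‖ ^ 2) ^ (-(((n : ℝ) - 2) / 2))

/-- Directional (partial) derivative of `f` at `x` in the direction `v`. -/
def pd {E : Type*} [NormedAddCommGroup E] [NormedSpace ℝ E]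
    (v : E) (f : E → ℝ) (x : E) : ℝ :=
  fderiv ℝ f x v

/-- The `i`-th horizontal coordinate direction. -/
def ez (n : ℕ) (i : Fin (n - 1)) : Pt n := (EuclideanSpace.single i 1, 0)

/-- The vertical (`t`) coordinate direction. -/
def et (n : ℕ) : Pt n := (0, 1)

/-- The Euclidean Laplacian `Δf = Σ_i ∂²f/∂z_i² + ∂²f/∂t²`. -/
def lap (n : ℕ) (f : Pt n → ℝ) (p : Pt n) : ℝ :=
  (∑ i : Fin (n - 1), pd (ez n i) (pd (ez n i) f) p) + pd (et n) (pd (et n) f) p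

/-- The open upper half-space. -/
def upperHalf (n : ℕ) : Set (Pt n) := {p | 0 < p.2}

/-- The closed upper half-space. -/
def closedHalf (n : ℕ) : Set (Pt n) := {p | 0 ≤ p.2}

/-- The Euclidean length `|y| = sqrt(|z|² + t²)` of `y = (z,t)`. -/
def nrm (n : ℕ) (p : Pt n) : ℝ := Real.sqrt (‖p.1‖ ^ 2 + p.2 ^ 2)

/-- `f_{A,B}(y) = Σ_{i,j} ((1/3) Σ_{k,l} A_{ikjl} y_k y_l + B_{ij} y_n²) ∂²U/∂y_i∂y_j`. -/
def fAB (n : ℕ) (A : Fin (n - 1) → Fin (n - 1) → Fin (n - 1) → Fin (n - 1) → ℝ)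
    (B : Fin (n - 1) → Fin (n - 1) → ℝ) (p : Pt n) : ℝ :=
  ∑ i : Fin (n - 1), ∑ j : Fin (n - 1),
    ((1 / 3) * (∑ k : Fin (n - 1), ∑ l : Fin (n - 1), A i k j l * p.1 k * p.1 l) +
        B i j * p.2 ^ 2) *
      pd (ez n i) (pd (ez n j) (stdBubble n)) p

/-!
By the antisymmetry of `A` the quartic form `∑ A_{ikjl} z_i z_k z_j z_l` vanishes, so `f_{A,B}` is a
sum of two quadrupoles `S(z, z) g(|z|², s)`: `S` is a partial trace of `A`, respectively `B`, and
`s = t + 1` is the height above the pole of the bubble. On trace-free quadrupoles the Laplacian acts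
as an operator in `(q, s) = (|z|², s)` alone. There `-Δ v = f_{A,B}` has explicit solutions built
from `s` and powers of `q + s²`, and the linearized boundary condition is restored by adding
harmonic terms: fields of poles on the negative vertical axis and their moments.

Every building block is homogeneous, which gives the decay. The orthogonality holds because a
trace-free quadratic form integrates to zero against radial weights. For the sign, a weighted
divergence of `V²` writes `V ΔV` as a divergence minus squares, and the flux through the boundary
has the right sign.
-/

section HalfSpaceCorrection

open Filter Topology Set Asymptotics
open scoped ContDiff

section AxisIntegral

/-- The squared distance from a unit vector whose last coordinate is `c` to the point at distance
`x` from the origin on the negative last axis. -/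
def axisDistSq (c x : ℝ) : ℝ := 1 + 2 * c * x + x ^ 2

/-- The potential at a unit vector with last coordinate `c` of the negative last axis, for the
kernel `(distance) ^ (-2 a)`. -/
def axisIntegral (a c : ℝ) : ℝ := ∫ x in Ioi (0 : ℝ), axisDistSq c x ^ (-a)

variable {a c x : ℝ}

@[simp] lemma axisDistSq_zero_right (c : ℝ) : axisDistSq c 0 = 1 := by simp [axisDistSq]

@[fun_prop] lemma measurable_axisDistSq_rpow (c b : ℝ) :
    Measurable fun x ↦ axisDistSq c x ^ b := by
  unfold axisDistSq
  fun_prop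

lemma axisDistSq_le_axisDistSq {c' : ℝ} (hc : c ≤ c') (hx : 0 ≤ x) :
    axisDistSq c x ≤ axisDistSq c' x := by
  unfold axisDistSq
  gcongr

lemma min_mul_le_axisDistSq (c : ℝ) (hx : 0 ≤ x) :
    min 1 (1 + c) * (1 + x ^ 2) ≤ axisDistSq c x := by
  unfold axisDistSq
  rcases min_cases 1 (1 + c) with ⟨h, hc⟩ | ⟨h, hc⟩ <;> rw [h]
  · nlinarith
  · nlinarith [mul_nonneg (sub_nonneg.2 hc.le) (sq_nonneg (x - 1))]

lemma axisDistSq_pos (hc : -1 < c) (hx : 0 ≤ x) : 0 < axisDistSq c x := by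
  have hmin : 0 < min 1 (1 + c) := lt_min one_pos (by linarith)
  exact lt_of_lt_of_le (by positivity) (min_mul_le_axisDistSq c hx)

lemma hasDerivAt_axisDistSq_left (c x : ℝ) :
    HasDerivAt (fun c ↦ axisDistSq c x) (2 * x) c := by
  simpa [axisDistSq] using
    ((((hasDerivAt_id c).const_mul 2).mul_const x).const_add 1).add_const (x ^ 2)

lemma hasDerivAt_axisDistSq_right (c x : ℝ) :
    HasDerivAt (axisDistSq c) (2 * (c + x)) x := by
  have h := (((hasDerivAt_id x).const_mul (2 * c)).const_add 1).add (hasDerivAt_pow 2 x)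
  exact h.congr_deriv (by norm_num; ring)

lemma integrableOn_pow_mul_axisDistSq_rpow (k : ℕ) (ha : k + 1 < 2 * a) (hc : -1 < c) :
    IntegrableOn (fun x ↦ x ^ k * axisDistSq c x ^ (-a)) (Ioi 0) := by
  set d := min 1 (1 + c)
  have hd : 0 < d := lt_min one_pos (by linarith)
  have hdom : Integrable fun x : ℝ ↦ d ^ (-a) * (1 + ‖x‖ ^ 2) ^ (-(2 * a - k) / 2) :=
    (integrable_rpow_neg_one_add_norm_sq (by simp; linarith)).const_mul _
  refine hdom.integrableOn.mono' (by fun_prop) ?_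
  filter_upwards [ae_restrict_mem measurableSet_Ioi] with x (hx : 0 < x)
  have hxk : x ^ k ≤ (1 + x ^ 2) ^ ((k : ℝ) / 2) := by
    rw [Real.rpow_div_two_eq_sqrt _ (by positivity), Real.rpow_natCast]
    gcongr
    exact Real.le_sqrt_of_sq_le (by linarith)
  have hpos := Real.rpow_nonneg (axisDistSq_pos hc hx.le).le (-a)
  rw [Real.norm_of_nonneg (by positivity), Real.norm_eq_abs, sq_abs]
  calc x ^ k * axisDistSq c x ^ (-a)
      ≤ (1 + x ^ 2) ^ ((k : ℝ) / 2) * (d * (1 + x ^ 2)) ^ (-a) := by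
        gcongr ?_ * ?_
        exact Real.rpow_le_rpow_of_nonpos (by positivity) (min_mul_le_axisDistSq c hx.le)
          (by linarith [k.cast_nonneg (α := ℝ)])
    _ = d ^ (-a) * (1 + x ^ 2) ^ (-(2 * a - k) / 2) := by
        rw [Real.mul_rpow hd.le (by positivity), mul_left_comm,
          ← Real.rpow_add (by positivity)]
        ring_nf

lemma integrableOn_axisDistSq_rpow (ha : 1 < 2 * a) (hc : -1 < c) :
    IntegrableOn (fun x ↦ axisDistSq c x ^ (-a)) (Ioi 0) := by
  simpa using integrableOn_pow_mul_axisDistSq_rpow 0 (by simpa using ha) hc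

lemma integrableOn_mul_axisDistSq_rpow (ha : 1 < a) (hc : -1 < c) :
    IntegrableOn (fun x ↦ x * axisDistSq c x ^ (-a)) (Ioi 0) := by
  simpa using integrableOn_pow_mul_axisDistSq_rpow 1 (by norm_num; linarith) hc

lemma integral_Ioi_deriv_eq_neg {f f' : ℝ → ℝ} (hderiv : ∀ x ∈ Ici 0, HasDerivAt f (f' x) x)
    (hf' : IntegrableOn f' (Ioi 0)) (hf : IntegrableOn f (Ioi 0)) :
    ∫ x in Ioi 0, f' x = -f 0 := by
  have hlim := tendsto_zero_of_hasDerivAt_of_integrableOn_Ioi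
    (fun x hx ↦ hderiv x (mem_Ici_of_Ioi hx)) hf' hf
  simpa using integral_Ioi_of_hasDerivAt_of_tendsto' hderiv hf' hlim

lemma hasDerivAt_axisDistSq_rpow (hc : -1 < c) (hx : 0 ≤ x) :
    HasDerivAt (fun x ↦ axisDistSq c x ^ (-a))
      (-(2 * a) * (c + x) * axisDistSq c x ^ (-(a + 1))) x := by
  refine ((hasDerivAt_axisDistSq_right c x).rpow_const
    (Or.inl (axisDistSq_pos hc hx).ne')).congr_deriv ?_
  rw [neg_add']
  ring

lemma integral_mul_axisDistSq_rpow (ha : 1 < 2 * a) (hc : -1 < c) :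
    2 * a * ∫ x in Ioi (0 : ℝ), x * axisDistSq c x ^ (-(a + 1)) =
      1 - 2 * a * c * axisIntegral (a + 1) c := by
  have h0 := integrableOn_axisDistSq_rpow (a := a + 1) (by linarith) hc
  have h1 := integrableOn_mul_axisDistSq_rpow (a := a + 1) (by linarith) hc
  have hsplit : ∀ x, -(2 * a) * (c + x) * axisDistSq c x ^ (-(a + 1)) =
      -(2 * a) * c * axisDistSq c x ^ (-(a + 1)) +
        -(2 * a) * (x * axisDistSq c x ^ (-(a + 1))) := fun x ↦ by ring
  have h := integral_Ioi_deriv_eq_neg (fun x hx ↦ hasDerivAt_axisDistSq_rpow (a := a) hc hx)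
    (by simp only [hsplit]; exact (h0.const_mul _).add (h1.const_mul _))
    (integrableOn_axisDistSq_rpow ha hc)
  simp only [hsplit, axisDistSq_zero_right, Real.one_rpow] at h
  rw [integral_add (h0.const_mul _) (h1.const_mul _), integral_const_mul, integral_const_mul] at h
  unfold axisIntegral
  linarith

lemma axisIntegral_reduction (ha : 1 < a) (hc : -1 < c) :
    2 * a * (1 - c ^ 2) * axisIntegral (a + 1) c = (2 * a - 1) * axisIntegral a c - c := by
  have h0 := integrableOn_axisDistSq_rpow (a := a) (by linarith) hc
  have h0' := integrableOn_axisDistSq_rpow (a := a + 1) (by linarith) hc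
  have h1 : IntegrableOn (fun x ↦ (x + c) * axisDistSq c x ^ (-a)) (Ioi 0) :=
    ((integrableOn_mul_axisDistSq_rpow ha hc).add (h0.const_mul c)).congr
      (ae_of_all _ fun x ↦ (add_mul _ _ _).symm)
  have h := integral_Ioi_deriv_eq_neg
    (f' := (fun x ↦ (1 - 2 * a) * axisDistSq c x ^ (-a)) +
      fun x ↦ 2 * a * (1 - c ^ 2) * axisDistSq c x ^ (-(a + 1)))
    (fun x hx ↦ ?_) ((h0.const_mul _).add (h0'.const_mul _)) h1
  · simp only [axisDistSq_zero_right, Real.one_rpow] at h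
    rw [integral_add' (h0.const_mul _) (h0'.const_mul _), integral_const_mul,
      integral_const_mul] at h
    unfold axisIntegral
    linarith
  · refine (((hasDerivAt_id x).add_const c).mul
      (hasDerivAt_axisDistSq_rpow (a := a) hc hx)).congr_deriv ?_
    have hpow : axisDistSq c x ^ (-a) = axisDistSq c x ^ (-(a + 1)) * axisDistSq c x := by
      rw [← Real.rpow_add_one (axisDistSq_pos hc hx).ne']
      ring_nf
    simp only [Pi.add_apply, hpow, id]
    generalize axisDistSq c x ^ (-(a + 1)) = R
    unfold axisDistSq
    ring

lemma hasDerivAt_axisIntegral (ha : 1 < 2 * a) (hc : -1 < c) :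
    HasDerivAt (axisIntegral a) (2 * a * c * axisIntegral (a + 1) c - 1) c := by
  obtain ⟨c₀, hc₀, hc₀c⟩ := exists_between hc
  have hdom := (integrableOn_mul_axisDistSq_rpow (a := a + 1) (by linarith) hc₀).const_mul (2 * a)
  have h := (hasDerivAt_integral_of_dominated_loc_of_deriv_le (s := Ioi c₀)
    (F := fun c x ↦ axisDistSq c x ^ (-a))
    (F' := fun c x ↦ -(2 * a * (x * axisDistSq c x ^ (-(a + 1)))))
    (Ioi_mem_nhds hc₀c)
    (Eventually.of_forall fun c ↦ (measurable_axisDistSq_rpow c _).aestronglyMeasurable)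
    (integrableOn_axisDistSq_rpow ha hc) (by fun_prop) ?_ hdom ?_).2
  · refine h.congr_deriv ?_
    rw [integral_neg, integral_const_mul, integral_mul_axisDistSq_rpow ha hc]
    ring
  · filter_upwards [ae_restrict_mem measurableSet_Ioi] with x (hx : 0 < x) c' (hc' : c₀ < c')
    have hpos := Real.rpow_nonneg (axisDistSq_pos (hc₀.trans hc') hx.le).le (-(a + 1))
    have : 0 ≤ a := by linarith
    rw [norm_neg, Real.norm_of_nonneg (by positivity)]
    gcongr 2 * a * (x * ?_)
    exact Real.rpow_le_rpow_of_nonpos (axisDistSq_pos hc₀ hx.le)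
      (axisDistSq_le_axisDistSq hc'.le hx.le) (by linarith)
  · filter_upwards [ae_restrict_mem measurableSet_Ioi] with x (hx : 0 < x) c' (hc' : c₀ < c')
    refine ((hasDerivAt_axisDistSq_left c' x).rpow_const
      (Or.inl (axisDistSq_pos (hc₀.trans hc') hx.le).ne')).congr_deriv ?_
    rw [neg_add']
    ring

lemma contDiffOn_axisIntegral (ha : 1 < 2 * a) : ContDiffOn ℝ ∞ (axisIntegral a) (Ioi (-1)) := by
  refine contDiffOn_infty.2 fun k ↦ ?_
  induction k generalizing a with
  | zero =>
    exact contDiffOn_zero.2 fun c hc ↦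
      (hasDerivAt_axisIntegral ha hc).continuousAt.continuousWithinAt
  | succ k ih =>
    have hderiv : ContDiffOn ℝ k (deriv (axisIntegral a)) (Ioi (-1)) := by
      refine ContDiffOn.congr (f := fun c ↦ 2 * a * c * axisIntegral (a + 1) c - 1) ?_
        fun c hc ↦ (hasDerivAt_axisIntegral ha hc).deriv
      have := ih (a := a + 1) (by linarith)
      fun_prop
    exact_mod_cast (contDiffOn_succ_iff_deriv_of_isOpen isOpen_Ioi).2
      ⟨fun c hc ↦ (hasDerivAt_axisIntegral ha hc).differentiableAt.differentiableWithinAt,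
        by simp, hderiv⟩

end AxisIntegral

section Symbols

variable {E : Type*} [NormedAddCommGroup E] {p : E × ℝ}

lemma isOpen_setOf_snd_pos : IsOpen {p : E × ℝ | 0 < p.2} :=
  isOpen_lt continuous_const continuous_snd

lemma one_le_norm_of_one_le_snd (hp : 1 ≤ p.2) : 1 ≤ ‖p‖ :=
  (hp.trans (le_abs_self _)).trans (norm_snd_le p)

lemma norm_pos_of_one_le_snd (hp : 1 ≤ p.2) : 0 < ‖p‖ :=
  one_pos.trans_le (one_le_norm_of_one_le_snd hp)

variable [NormedSpace ℝ E] {e e' : ℝ} {f g : E × ℝ → ℝ}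

/-- The symbol class of order `e` on the upper half-space: smooth functions whose derivatives of
order `j` grow at most like `‖p‖ ^ (e - j)`. The bounds are only required for `1 ≤ p.2`, away
from a singularity at the origin. -/
structure IsSymbol (e : ℝ) (f : E × ℝ → ℝ) : Prop where
  contDiffAt : ∀ p, 0 < p.2 → ContDiffAt ℝ ∞ f p
  isBigO : ∀ j : ℕ, iteratedFDeriv ℝ j f =O[𝓟 {p | 1 ≤ p.2}] fun p ↦ ‖p‖ ^ (e - j)

namespace IsSymbol

lemma contDiffAt_of_one_le (hf : IsSymbol e f) (hp : 1 ≤ p.2) (j : ℕ) : ContDiffAt ℝ j f p :=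
  (hf.contDiffAt p (one_pos.trans_le hp)).of_le (mod_cast le_top)

lemma differentiableAt (hf : IsSymbol e f) (hp : 0 < p.2) : DifferentiableAt ℝ f p :=
  (hf.contDiffAt p hp).differentiableAt (by simp)

lemma mono (hf : IsSymbol e f) (he : e ≤ e') : IsSymbol e' f where
  contDiffAt := hf.contDiffAt
  isBigO j := (hf.isBigO j).trans <| IsBigO.of_bound' <| eventually_principal.2 fun _ hp ↦ by
    rw [Real.norm_of_nonneg (by positivity), Real.norm_of_nonneg (by positivity)]
    gcongr
    exact one_le_norm_of_one_le_snd hp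

lemma congr (hf : IsSymbol e f) (hfg : ∀ p, 0 < p.2 → g p = f p) : IsSymbol e g := by
  have hev : ∀ p : E × ℝ, 0 < p.2 → g =ᶠ[𝓝 p] f := fun p hp ↦
    eventually_of_mem (isOpen_setOf_snd_pos.mem_nhds hp) hfg
  refine ⟨fun p hp ↦ (hf.contDiffAt p hp).congr_of_eventuallyEq (hev p hp), fun j ↦ ?_⟩
  exact (hf.isBigO j).congr' (eventually_principal.2 fun p hp ↦
    ((hev p (one_pos.trans_le hp)).iteratedFDeriv ℝ j).eq_of_nhds.symm) .rfl

lemma add (hf : IsSymbol e f) (hg : IsSymbol e g) : IsSymbol e fun p ↦ f p + g p where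
  contDiffAt p hp := (hf.contDiffAt p hp).add (hg.contDiffAt p hp)
  isBigO j := ((hf.isBigO j).add (hg.isBigO j)).congr' (eventually_principal.2 fun _ hp ↦
    (fun_iteratedFDeriv_add_apply (hf.contDiffAt_of_one_le hp j)
      (hg.contDiffAt_of_one_le hp j)).symm) .rfl

lemma mul (hf : IsSymbol e f) (hg : IsSymbol e' g) : IsSymbol (e + e') fun p ↦ f p * g p where
  contDiffAt p hp := (hf.contDiffAt p hp).mul (hg.contDiffAt p hp)
  isBigO j := by
    have hleibniz : iteratedFDeriv ℝ j (fun p ↦ f p * g p) =O[𝓟 {p | 1 ≤ p.2}] fun p ↦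
        ∑ i ∈ Finset.range (j + 1), (j.choose i : ℝ) *
          (‖iteratedFDeriv ℝ i f p‖ * ‖iteratedFDeriv ℝ (j - i) g p‖) := by
      refine IsBigO.of_bound' (eventually_principal.2 fun p hp ↦ ?_)
      have hp0 : p ∈ {p : E × ℝ | 0 < p.2} := one_pos.trans_le (show 1 ≤ p.2 from hp)
      have h := norm_iteratedFDerivWithin_mul_le (n := j) (N := ∞) (s := {p : E × ℝ | 0 < p.2})
        (fun p hp ↦ (hf.contDiffAt p hp).contDiffWithinAt)
        (fun p hp ↦ (hg.contDiffAt p hp).contDiffWithinAt)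
        isOpen_setOf_snd_pos.uniqueDiffOn hp0 (mod_cast le_top)
      simp only [iteratedFDerivWithin_of_isOpen _ isOpen_setOf_snd_pos hp0, mul_assoc] at h
      exact h.trans (le_abs_self _)
    refine hleibniz.trans (IsBigO.fun_sum fun i hi ↦ IsBigO.const_mul_left ?_ _)
    refine ((hf.isBigO i).norm_left.mul (hg.isBigO (j - i)).norm_left).congr' .rfl
      (eventually_principal.2 fun p hp ↦ ?_)
    dsimp only
    rw [← Real.rpow_add (norm_pos_of_one_le_snd hp),
      Nat.cast_sub (Nat.lt_succ_iff.1 (Finset.mem_range.1 hi))]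
    ring_nf

lemma pd (hf : IsSymbol e f) (v : E × ℝ) : IsSymbol (e - 1) (pd v f) where
  contDiffAt p hp := ((hf.contDiffAt p hp).fderiv_right (m := ∞) (by simp)).clm_apply
    contDiffAt_const
  isBigO j := by
    have hpd : iteratedFDeriv ℝ j (_root_.pd v f) =O[𝓟 {p | 1 ≤ p.2}]
        iteratedFDeriv ℝ (j + 1) f := by
      refine IsBigO.of_bound ‖v‖ (eventually_principal.2 fun p hp ↦ ?_)
      rw [← norm_iteratedFDeriv_fderiv]
      exact norm_iteratedFDeriv_clm_apply_const
        ((hf.contDiffAt_of_one_le hp (j + 2)).fderiv_right (by norm_cast; omega)) le_rfl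
    refine (hpd.trans (hf.isBigO (j + 1))).congr_right fun p ↦ ?_
    push_cast
    ring_nf

lemma exists_bound (hf : IsSymbol e f) (j : ℕ) :
    ∃ C, ∀ p : E × ℝ, 1 ≤ p.2 → ‖iteratedFDeriv ℝ j f p‖ ≤ C * ‖p‖ ^ (e - j) := by
  obtain ⟨C, hC⟩ := isBigO_principal.1 (hf.isBigO j)
  refine ⟨C, fun p hp ↦ (hC p hp).trans_eq ?_⟩
  rw [Real.norm_of_nonneg (by positivity)]

end IsSymbol

lemma norm_iteratedFDeriv_of_homogeneous {F : Type*} [NormedAddCommGroup F] [NormedSpace ℝ F]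
    {f : F → ℝ} {d c : ℝ} (hc : 0 < c) (hhom : ∀ x, f (c • x) = c ^ d * f x) {j : ℕ} {x : F}
    (hf : ContDiffAt ℝ j f (c • x)) :
    ‖iteratedFDeriv ℝ j f x‖ ≤ c ^ (j - d) * ‖iteratedFDeriv ℝ j f (c • x)‖ := by
  let S : F ≃L[ℝ] F := ContinuousLinearEquiv.smulLeft (Units.mk0 c hc.ne')
  have hS : ‖(S : F →L[ℝ] F)‖ ≤ c :=
    ContinuousLinearMap.opNorm_le_bound _ hc.le fun y ↦
      (norm_smul c y).trans_le (by rw [Real.norm_of_nonneg hc.le])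
  have hfS : f = c ^ (-d) • (f ∘ S) := funext fun y ↦ by
    change f y = c ^ (-d) * f (c • y)
    rw [hhom, ← mul_assoc, ← Real.rpow_add hc, neg_add_cancel, Real.rpow_zero, one_mul]
  have hcomp : iteratedFDeriv ℝ j (f ∘ S) x =
      (iteratedFDeriv ℝ j f (c • x)).compContinuousLinearMap fun _ ↦ (S : F →L[ℝ] F) := by
    have h := S.iteratedFDerivWithin_comp_right f uniqueDiffOn_univ (mem_univ (S x)) j
    rwa [preimage_univ, iteratedFDerivWithin_univ, iteratedFDerivWithin_univ] at h
  have hcomp_le : ‖iteratedFDeriv ℝ j (f ∘ S) x‖ ≤ ‖iteratedFDeriv ℝ j f (c • x)‖ * c ^ j := by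
    rw [hcomp]
    refine (ContinuousMultilinearMap.norm_compContinuousLinearMap_le _ _).trans ?_
    simp only [Finset.prod_const, Finset.card_univ, Fintype.card_fin]
    gcongr
  calc ‖iteratedFDeriv ℝ j f x‖ = c ^ (-d) * ‖iteratedFDeriv ℝ j (f ∘ S) x‖ := by
        conv_lhs => rw [hfS]
        rw [iteratedFDeriv_const_smul_apply (f := f ∘ S) (hf.comp x S.contDiff.contDiffAt),
          norm_smul, Real.norm_of_nonneg (by positivity)]
    _ ≤ c ^ (-d) * (‖iteratedFDeriv ℝ j f (c • x)‖ * c ^ j) := by gcongr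
    _ = c ^ (j - d) * ‖iteratedFDeriv ℝ j f (c • x)‖ := by
        rw [sub_eq_neg_add, Real.rpow_add hc, Real.rpow_natCast]
        ring

section FiniteDimensional

variable [FiniteDimensional ℝ E]

-- The rescaled points `‖p‖⁻¹ • p` range over the compact closed half-sphere.
lemma IsSymbol.of_homogeneous {d : ℝ} (hf : ∀ p, 0 ≤ p.2 → p ≠ 0 → ContDiffAt ℝ ∞ f p)
    (hhom : ∀ c : ℝ, 0 < c → ∀ p, f (c • p) = c ^ d * f p) : IsSymbol d f := by
  refine ⟨fun p hp ↦ hf p hp.le (by rintro rfl; exact hp.false), fun j ↦ ?_⟩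
  set K := Metric.sphere (0 : E × ℝ) 1 ∩ {p | 0 ≤ p.2}
  have hK : IsCompact K :=
    (isCompact_sphere _ _).inter_right (isClosed_le continuous_const continuous_snd)
  have hfK : ∀ p ∈ K, ContDiffAt ℝ j f p := fun p hp ↦
    (hf p hp.2 (Metric.ne_of_mem_sphere hp.1 one_ne_zero)).of_le (mod_cast le_top)
  obtain ⟨M, hM⟩ := hK.exists_bound_of_continuousOn (f := iteratedFDeriv ℝ j f) fun p hp ↦
    ((hfK p hp).continuousAt_iteratedFDeriv le_rfl).continuousWithinAt
  refine isBigO_principal.2 ⟨M, fun p hp ↦ ?_⟩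
  have hp0 : 0 < ‖p‖ := norm_pos_of_one_le_snd hp
  have hpK : ‖p‖⁻¹ • p ∈ K := by
    refine ⟨by simp [norm_smul, hp0.ne'], ?_⟩
    have : 0 ≤ p.2 := zero_le_one.trans hp
    simp only [mem_ofPred_eq, Prod.smul_snd, smul_eq_mul]
    positivity
  rw [Real.norm_of_nonneg (by positivity), mul_comm]
  calc ‖iteratedFDeriv ℝ j f p‖
      ≤ ‖p‖⁻¹ ^ (j - d) * ‖iteratedFDeriv ℝ j f (‖p‖⁻¹ • p)‖ :=
        norm_iteratedFDeriv_of_homogeneous (inv_pos.2 hp0) (hhom _ (inv_pos.2 hp0)) (hfK _ hpK)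
    _ ≤ ‖p‖ ^ (d - j) * M := by
        rw [Real.inv_rpow hp0.le, ← Real.rpow_neg hp0.le, neg_sub]
        gcongr
        exact hM _ hpK

namespace IsSymbol

lemma const (c : ℝ) : IsSymbol 0 fun _ : E × ℝ ↦ c :=
  .of_homogeneous (fun _ _ _ ↦ contDiffAt_const) (by simp)

lemma const_mul (c : ℝ) (hf : IsSymbol e f) : IsSymbol e fun p ↦ c * f p := by
  simpa only [zero_add] using (const c).mul hf

lemma zero (e : ℝ) : IsSymbol e fun _ : E × ℝ ↦ 0 :=
  .of_homogeneous (fun _ _ _ ↦ contDiffAt_const) (by simp)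

lemma sum {ι : Type*} (s : Finset ι) {f : ι → E × ℝ → ℝ} (hf : ∀ i ∈ s, IsSymbol e (f i)) :
    IsSymbol e fun p ↦ ∑ i ∈ s, f i p := by
  classical
  induction s using Finset.induction_on with
  | empty => simpa using zero e
  | insert a s ha ih =>
    simp only [Finset.sum_insert ha]
    exact (hf a (by simp)).add (ih fun i hi ↦ hf i (by simp [hi]))

lemma snd : IsSymbol 1 fun p : E × ℝ ↦ p.2 :=
  .of_homogeneous (fun _ _ _ ↦ by fun_prop) (by simp)

lemma clm_fst (L : E →L[ℝ] ℝ) : IsSymbol 1 fun p : E × ℝ ↦ L p.1 :=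
  .of_homogeneous (fun _ _ _ ↦ by fun_prop) (by simp)

end IsSymbol

end FiniteDimensional

end Symbols

section RadialJets

/-- The function `∫₀^∞ (q + (s + x) ^ 2) ^ (-b) dx` of `q = |z|²` and the height `s`, a
superposition of poles on the negative vertical axis, in the form given by the scaling
`x ↦ √(q + s ^ 2) x`. -/
def polePotential (b q s : ℝ) : ℝ :=
  √(q + s ^ 2) ^ (1 - 2 * b) * axisIntegral b (s / √(q + s ^ 2))

section PolePotential

variable {b q s : ℝ}

lemma neg_one_lt_div_sqrt (hs : 0 ≤ s) (r : ℝ) : -1 < s / √r :=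
  neg_one_lt_zero.trans_le (by positivity)

lemma sqrt_rpow_neg_two_mul {r : ℝ} (hr : 0 ≤ r) (b : ℝ) : √r ^ (-(2 * b)) = r ^ (-b) := by
  rw [← Real.rpow_div_two_eq_sqrt _ hr]
  ring_nf

-- The reduction formula cancels every `axisIntegral b` produced by the product rule.
lemma hasDerivAt_rpow_mul_axisIntegral_div (hb : 1 < b) {ρ σ : ℝ → ℝ} {ρ' σ' x : ℝ}
    (hρ : HasDerivAt ρ ρ' x) (hσ : HasDerivAt σ σ' x) (hρx : 0 < ρ x) (hσx : -1 < σ x / ρ x) :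
    HasDerivAt (fun x ↦ ρ x ^ (1 - 2 * b) * axisIntegral b (σ x / ρ x))
      (ρ x ^ (-(2 * b)) *
        (2 * b * (σ x / ρ x * σ' - ρ') * axisIntegral (b + 1) (σ x / ρ x) - σ')) x := by
  refine ((hρ.rpow_const (Or.inl hρx.ne')).mul
    ((hasDerivAt_axisIntegral (a := b) (by linarith) hσx).comp x
      (hσ.fun_div hρ hρx.ne'))).congr_deriv ?_
  have hred := axisIntegral_reduction hb hσx
  rw [show 1 - 2 * b - 1 = -(2 * b) by ring, show 1 - 2 * b = -(2 * b) + 1 by ring,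
    Real.rpow_add_one hρx.ne']
  simp only [Function.comp_apply]
  have hσc : σ x = σ x / ρ x * ρ x := by field_simp
  generalize σ x / ρ x = c at *
  rw [hσc]
  field_simp
  linear_combination ρ' * hred

lemma hasDerivAt_sqrt_add_sq_left (hr : 0 < q + s ^ 2) :
    HasDerivAt (fun q ↦ √(q + s ^ 2)) (1 / (2 * √(q + s ^ 2))) q :=
  ((hasDerivAt_id q).add_const _).sqrt hr.ne'

lemma hasDerivAt_sqrt_add_sq_right (hr : 0 < q + s ^ 2) :
    HasDerivAt (fun s ↦ √(q + s ^ 2)) (s / √(q + s ^ 2)) s := by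
  refine (((hasDerivAt_pow 2 s).const_add q).sqrt hr.ne').congr_deriv ?_
  field_simp
  norm_num

lemma hasDerivAt_add_sq_rpow_left (a : ℝ) (hr : 0 < q + s ^ 2) :
    HasDerivAt (fun q ↦ (q + s ^ 2) ^ a) (a * (q + s ^ 2) ^ (a - 1)) q := by
  simpa using ((hasDerivAt_id q).add_const (s ^ 2)).rpow_const (p := a) (Or.inl hr.ne')

lemma hasDerivAt_add_sq_rpow_right (a : ℝ) (hr : 0 < q + s ^ 2) :
    HasDerivAt (fun s ↦ (q + s ^ 2) ^ a) (2 * a * s * (q + s ^ 2) ^ (a - 1)) s := by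
  refine (((hasDerivAt_pow 2 s).const_add q).rpow_const (Or.inl hr.ne')).congr_deriv ?_
  rw [Nat.cast_ofNat, Nat.add_one_sub_one, pow_one]
  ring

lemma hasDerivAt_polePotential_left (hb : 1 < b) (hq : 0 ≤ q) (hs : 0 < s) :
    HasDerivAt (fun q ↦ polePotential b q s) (-b * polePotential (b + 1) q s) q := by
  have hr : 0 < q + s ^ 2 := by positivity
  refine (hasDerivAt_rpow_mul_axisIntegral_div hb (hasDerivAt_sqrt_add_sq_left hr)
    (hasDerivAt_const q s) (Real.sqrt_pos.2 hr) (neg_one_lt_div_sqrt hs.le _)).congr_deriv ?_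
  have hpow : √(q + s ^ 2) ^ (-(2 * b)) = √(q + s ^ 2) ^ (1 - 2 * (b + 1)) * √(q + s ^ 2) := by
    rw [← Real.rpow_add_one (Real.sqrt_pos.2 hr).ne']
    ring_nf
  rw [polePotential, hpow]
  field_simp
  ring

lemma hasDerivAt_polePotential_right (hb : 1 < b) (hq : 0 ≤ q) (hs : 0 < s) :
    HasDerivAt (polePotential b q) (-(q + s ^ 2) ^ (-b)) s := by
  have hr : 0 < q + s ^ 2 := by positivity
  refine (hasDerivAt_rpow_mul_axisIntegral_div hb (hasDerivAt_sqrt_add_sq_right hr)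
    (hasDerivAt_id s) (Real.sqrt_pos.2 hr) (neg_one_lt_div_sqrt hs.le _)).congr_deriv ?_
  rw [sqrt_rpow_neg_two_mul hr.le, id]
  ring

lemma polePotential_reduction (hb : 1 < b) (hq : 0 ≤ q) (hs : 0 < s) :
    2 * b * q * polePotential (b + 1) q s =
      (2 * b - 1) * polePotential b q s - s * (q + s ^ 2) ^ (-b) := by
  have hr : 0 < q + s ^ 2 := by positivity
  have hsqrt : √(q + s ^ 2) ^ 2 = q + s ^ 2 := Real.sq_sqrt hr.le
  have hpow : √(q + s ^ 2) ^ (1 - 2 * (b + 1)) = (q + s ^ 2) ^ (-b) * (√(q + s ^ 2))⁻¹ := by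
    rw [← sqrt_rpow_neg_two_mul hr.le, ← div_eq_mul_inv,
      ← Real.rpow_sub_one (Real.sqrt_pos.2 hr).ne']
    ring_nf
  have hpow' : √(q + s ^ 2) ^ (1 - 2 * b) = (q + s ^ 2) ^ (-b) * √(q + s ^ 2) := by
    rw [← sqrt_rpow_neg_two_mul hr.le, ← Real.rpow_add_one (Real.sqrt_pos.2 hr).ne']
    ring_nf
  have hred := axisIntegral_reduction hb (neg_one_lt_div_sqrt hs.le (q + s ^ 2))
  rw [polePotential, polePotential, hpow, hpow']
  have hρ := Real.sqrt_pos.2 hr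
  generalize √(q + s ^ 2) = ρ at *
  generalize (q + s ^ 2) ^ (-b) = R
  obtain rfl : q = ρ ^ 2 - s ^ 2 := by linarith
  have hsc : s = s / ρ * ρ := by field_simp
  generalize s / ρ = c at *
  subst hsc
  field_simp
  linear_combination R * hred

end PolePotential

/-- A function of `q = |z|²` and the height `s` together with its derivatives `∂_q`, `∂_s`, `∂_q²`
and `∂_s²`. -/
structure RadialJet where
  val : ℝ → ℝ → ℝ
  dq : ℝ → ℝ → ℝ
  ds : ℝ → ℝ → ℝ
  dqq : ℝ → ℝ → ℝ
  dss : ℝ → ℝ → ℝ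

/-- The axially symmetric function `(z, s) ↦ g |z|² s`. -/
def axial {E : Type*} [NormedAddCommGroup E] (g : ℝ → ℝ → ℝ) (p : E × ℝ) : ℝ := g (‖p.1‖ ^ 2) p.2

namespace RadialJet

@[simps] instance : Add RadialJet where
  add J K :=
    { val q s := J.val q s + K.val q s
      dq q s := J.dq q s + K.dq q s
      ds q s := J.ds q s + K.ds q s
      dqq q s := J.dqq q s + K.dqq q s
      dss q s := J.dss q s + K.dss q s }

@[simps] instance : SMul ℝ RadialJet where
  smul c J :=
    { val q s := c * J.val q s
      dq q s := c * J.dq q s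
      ds q s := c * J.ds q s
      dqq q s := c * J.dqq q s
      dss q s := c * J.dss q s }

@[simps] instance : Mul RadialJet where
  mul J K :=
    { val q s := J.val q s * K.val q s
      dq q s := J.dq q s * K.val q s + J.val q s * K.dq q s
      ds q s := J.ds q s * K.val q s + J.val q s * K.ds q s
      dqq q s := J.dqq q s * K.val q s + 2 * (J.dq q s * K.dq q s) + J.val q s * K.dqq q s
      dss q s := J.dss q s * K.val q s + 2 * (J.ds q s * K.ds q s) + J.val q s * K.dss q s }

/-- The height function `s`. -/
@[simps] def height : RadialJet := ⟨fun _ s ↦ s, 0, fun _ _ ↦ 1, 0, 0⟩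

/-- The power `|y| ^ (2 a) = (q + s ^ 2) ^ a`. -/
@[simps] def normSqRpow (a : ℝ) : RadialJet where
  val q s := (q + s ^ 2) ^ a
  dq q s := a * (q + s ^ 2) ^ (a - 1)
  ds q s := 2 * a * s * (q + s ^ 2) ^ (a - 1)
  dqq q s := a * (a - 1) * (q + s ^ 2) ^ (a - 2)
  dss q s := 2 * a * (q + s ^ 2) ^ (a - 1) + 4 * a * (a - 1) * s ^ 2 * (q + s ^ 2) ^ (a - 2)

/-- The jet of `polePotential`. -/
@[simps] def pole (b : ℝ) : RadialJet where
  val := polePotential b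
  dq q s := -b * polePotential (b + 1) q s
  ds q s := -(q + s ^ 2) ^ (-b)
  dqq q s := b * (b + 1) * polePotential (b + 2) q s
  dss q s := 2 * b * s * (q + s ^ 2) ^ (-b - 1)

/-- The components of `J` are the derivatives they are named after, and `J` represents a symbol of
order `e` on `E × ℝ`, with the corresponding order for `∂_q`, as `q` has order two. -/
structure HasOrder (E : Type*) [NormedAddCommGroup E] [NormedSpace ℝ E] (J : RadialJet) (e : ℝ) :
    Prop where
  isSymbol : IsSymbol e (axial J.val : E × ℝ → ℝ)
  isSymbol_dq : IsSymbol (e - 2) (axial J.dq : E × ℝ → ℝ)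
  hasDerivAt_q {q s : ℝ} : 0 ≤ q → 0 < s → HasDerivAt (fun q ↦ J.val q s) (J.dq q s) q
  hasDerivAt_s {q s : ℝ} : 0 ≤ q → 0 < s → HasDerivAt (J.val q) (J.ds q s) s
  hasDerivAt_dq {q s : ℝ} : 0 ≤ q → 0 < s → HasDerivAt (fun q ↦ J.dq q s) (J.dqq q s) q
  hasDerivAt_ds {q s : ℝ} : 0 ≤ q → 0 < s → HasDerivAt (J.ds q) (J.dss q s) s

namespace HasOrder

variable {E : Type*} [NormedAddCommGroup E] {J K : RadialJet} {e e' : ℝ}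

section NormedSpace

variable [NormedSpace ℝ E]

lemma mono (hJ : HasOrder E J e) (he : e ≤ e') : HasOrder E J e' :=
  { hJ with
    isSymbol := hJ.isSymbol.mono he
    isSymbol_dq := hJ.isSymbol_dq.mono (by linarith) }

lemma add (hJ : HasOrder E J e) (hK : HasOrder E K e) : HasOrder E (J + K) e where
  isSymbol := hJ.isSymbol.add hK.isSymbol
  isSymbol_dq := hJ.isSymbol_dq.add hK.isSymbol_dq
  hasDerivAt_q hq hs := (hJ.hasDerivAt_q hq hs).add (hK.hasDerivAt_q hq hs)
  hasDerivAt_s hq hs := (hJ.hasDerivAt_s hq hs).add (hK.hasDerivAt_s hq hs)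
  hasDerivAt_dq hq hs := (hJ.hasDerivAt_dq hq hs).add (hK.hasDerivAt_dq hq hs)
  hasDerivAt_ds hq hs := (hJ.hasDerivAt_ds hq hs).add (hK.hasDerivAt_ds hq hs)

lemma mul (hJ : HasOrder E J e) (hK : HasOrder E K e') : HasOrder E (J * K) (e + e') where
  isSymbol := hJ.isSymbol.mul hK.isSymbol
  isSymbol_dq := ((hJ.isSymbol_dq.mul hK.isSymbol).mono (by linarith)).add
    ((hJ.isSymbol.mul hK.isSymbol_dq).mono (by linarith))
  hasDerivAt_q hq hs := (hJ.hasDerivAt_q hq hs).mul (hK.hasDerivAt_q hq hs)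
  hasDerivAt_s hq hs := (hJ.hasDerivAt_s hq hs).mul (hK.hasDerivAt_s hq hs)
  hasDerivAt_dq hq hs := by
    refine (((hJ.hasDerivAt_dq hq hs).mul (hK.hasDerivAt_q hq hs)).add
      ((hJ.hasDerivAt_q hq hs).mul (hK.hasDerivAt_dq hq hs))).congr_deriv ?_
    rw [mul_dqq]
    ring
  hasDerivAt_ds hq hs := by
    refine (((hJ.hasDerivAt_ds hq hs).mul (hK.hasDerivAt_s hq hs)).add
      ((hJ.hasDerivAt_s hq hs).mul (hK.hasDerivAt_ds hq hs))).congr_deriv ?_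
    rw [mul_dss]
    ring

variable [FiniteDimensional ℝ E]

lemma smul (c : ℝ) (hJ : HasOrder E J e) : HasOrder E (c • J) e where
  isSymbol := hJ.isSymbol.const_mul c
  isSymbol_dq := hJ.isSymbol_dq.const_mul c
  hasDerivAt_q hq hs := (hJ.hasDerivAt_q hq hs).const_mul c
  hasDerivAt_s hq hs := (hJ.hasDerivAt_s hq hs).const_mul c
  hasDerivAt_dq hq hs := (hJ.hasDerivAt_dq hq hs).const_mul c
  hasDerivAt_ds hq hs := (hJ.hasDerivAt_ds hq hs).const_mul c

protected lemma height : HasOrder E height 1 where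
  isSymbol := .snd
  isSymbol_dq := .zero _
  hasDerivAt_q _ _ := hasDerivAt_const _ _
  hasDerivAt_s _ _ := hasDerivAt_id _
  hasDerivAt_dq _ _ := hasDerivAt_const _ _
  hasDerivAt_ds _ _ := hasDerivAt_const _ _

end NormedSpace

end HasOrder

end RadialJet

section BuildingBlocks

variable {E : Type*} [NormedAddCommGroup E] {a b : ℝ} {p : E × ℝ}

lemma norm_sq_add_sq_pos (hp : p ≠ 0) : 0 < ‖p.1‖ ^ 2 + p.2 ^ 2 := by
  rcases eq_or_ne p.1 0 with h1 | h1
  · have h2 : p.2 ≠ 0 := fun h2 ↦ hp (Prod.ext h1 h2)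
    positivity
  · positivity

lemma norm_smul_sq_add_sq [NormedSpace ℝ E] (c : ℝ) (p : E × ℝ) :
    ‖(c • p).1‖ ^ 2 + (c • p).2 ^ 2 = c ^ 2 * (‖p.1‖ ^ 2 + p.2 ^ 2) := by
  simp only [Prod.smul_fst, Prod.smul_snd, norm_smul, Real.norm_eq_abs, smul_eq_mul, mul_pow,
    sq_abs]
  ring

variable [InnerProductSpace ℝ E]

lemma contDiff_norm_sq_add_sq : ContDiff ℝ ∞ fun p : E × ℝ ↦ ‖p.1‖ ^ 2 + p.2 ^ 2 :=
  (contDiff_fst.norm_sq ℝ).add (contDiff_snd.pow 2)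

lemma contDiffAt_axial_polePotential (hb : 1 < b) (hp : 0 ≤ p.2) (hp0 : p ≠ 0) :
    ContDiffAt ℝ ∞ (axial (polePotential b)) p := by
  have hr := norm_sq_add_sq_pos hp0
  have hsqrt := contDiff_norm_sq_add_sq.contDiffAt.sqrt hr.ne'
  have haxis : ContDiffAt ℝ ∞ (axisIntegral b) (p.2 / √(‖p.1‖ ^ 2 + p.2 ^ 2)) :=
    (contDiffOn_axisIntegral (by linarith)).contDiffAt (Ioi_mem_nhds (neg_one_lt_div_sqrt hp _))
  exact (hsqrt.rpow_const_of_ne (Real.sqrt_pos.2 hr).ne').mul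
    (haxis.comp (f := fun p : E × ℝ ↦ p.2 / √(‖p.1‖ ^ 2 + p.2 ^ 2)) p
      (contDiff_snd.contDiffAt.div hsqrt (Real.sqrt_pos.2 hr).ne'))

variable [FiniteDimensional ℝ E]

lemma isSymbol_axial_normSq_rpow (a : ℝ) :
    IsSymbol (2 * a) (axial fun q s ↦ (q + s ^ 2) ^ a : E × ℝ → ℝ) := by
  refine .of_homogeneous (fun p _ hp0 ↦
    contDiff_norm_sq_add_sq.contDiffAt.rpow_const_of_ne (norm_sq_add_sq_pos hp0).ne')
    fun c hc p ↦ ?_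
  rw [axial, norm_smul_sq_add_sq, Real.mul_rpow (by positivity) (by positivity),
    Real.rpow_mul hc.le, Real.rpow_two]
  rfl

lemma isSymbol_axial_polePotential (hb : 1 < b) :
    IsSymbol (1 - 2 * b) (axial (polePotential b) : E × ℝ → ℝ) := by
  refine .of_homogeneous (fun p ↦ contDiffAt_axial_polePotential hb) fun c hc p ↦ ?_
  rw [axial, polePotential, norm_smul_sq_add_sq, Real.sqrt_mul (by positivity),
    Real.sqrt_sq hc.le, Real.mul_rpow hc.le (by positivity), Prod.smul_snd, smul_eq_mul,
    mul_div_mul_left _ _ hc.ne', mul_assoc]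
  rfl

namespace RadialJet.HasOrder

protected lemma normSqRpow (a : ℝ) : HasOrder E (normSqRpow a) (2 * a) where
  isSymbol := isSymbol_axial_normSq_rpow a
  isSymbol_dq := ((isSymbol_axial_normSq_rpow (a - 1)).const_mul a).mono (by linarith)
  hasDerivAt_q _ hs := hasDerivAt_add_sq_rpow_left a (by positivity)
  hasDerivAt_s _ hs := hasDerivAt_add_sq_rpow_right a (by positivity)
  hasDerivAt_dq _ hs := by
    refine ((hasDerivAt_add_sq_rpow_left (a - 1) (by positivity)).const_mul a).congr_deriv ?_
    rw [normSqRpow_dqq, sub_sub, one_add_one_eq_two]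
    ring
  hasDerivAt_ds {_ s} _ hs := by
    refine (((hasDerivAt_id s).const_mul (2 * a)).mul
      (hasDerivAt_add_sq_rpow_right (a - 1) (by positivity))).congr_deriv ?_
    rw [normSqRpow_dss, sub_sub, one_add_one_eq_two, id]
    ring

protected lemma pole (hb : 1 < b) : HasOrder E (pole b) (1 - 2 * b) where
  isSymbol := isSymbol_axial_polePotential hb
  isSymbol_dq := ((isSymbol_axial_polePotential (by linarith)).const_mul (-b)).mono (by linarith)
  hasDerivAt_q := hasDerivAt_polePotential_left hb
  hasDerivAt_s := hasDerivAt_polePotential_right hb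
  hasDerivAt_dq hq hs := by
    refine ((hasDerivAt_polePotential_left (by linarith) hq hs).const_mul (-b)).congr_deriv ?_
    rw [pole_dqq, add_assoc, one_add_one_eq_two]
    ring
  hasDerivAt_ds _ _ :=
    (hasDerivAt_add_sq_rpow_right (-b) (by positivity)).fun_neg.congr_deriv
      (by rw [pole_dss]; ring)

end RadialJet.HasOrder

end BuildingBlocks

end RadialJets

section PartialDerivatives

variable {F : Type*} [NormedAddCommGroup F] [NormedSpace ℝ F] {f g : F → ℝ} {v x : F}

lemma pd_eq_of_hasLineDerivAt {d : ℝ} (hf : DifferentiableAt ℝ f x)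
    (hd : HasLineDerivAt ℝ f d x v) : pd v f x = d :=
  (hf.hasFDerivAt.hasLineDerivAt v).unique hd

lemma pd_add (hf : DifferentiableAt ℝ f x) (hg : DifferentiableAt ℝ g x) :
    pd v (fun y ↦ f y + g y) x = pd v f x + pd v g x := by
  rw [pd, fderiv_fun_add hf hg]
  rfl

lemma pd_mul (hf : DifferentiableAt ℝ f x) (hg : DifferentiableAt ℝ g x) :
    pd v (fun y ↦ f y * g y) x = pd v f x * g x + f x * pd v g x := by
  rw [pd, fderiv_fun_mul hf hg, add_apply, smul_apply, smul_apply, smul_eq_mul, smul_eq_mul, pd, pd]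
  ring

lemma pd_const_mul (c : ℝ) (hf : DifferentiableAt ℝ f x) :
    pd v (fun y ↦ c * f y) x = c * pd v f x := by
  rw [pd, fderiv_const_mul hf, smul_apply, smul_eq_mul, pd]

lemma pd_sum {ι : Type*} {s : Finset ι} {f : ι → F → ℝ}
    (hf : ∀ i ∈ s, DifferentiableAt ℝ (f i) x) :
    pd v (fun y ↦ ∑ i ∈ s, f i y) x = ∑ i ∈ s, pd v (f i) x := by
  rw [pd, fderiv_fun_sum hf, sum_apply]
  rfl

lemma pd_comp_add_right (a : F) : pd v (fun y ↦ f (y + a)) x = pd v f (x + a) := by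
  rw [pd, fderiv_comp_add_right, pd]

end PartialDerivatives

section HalfSpaceDerivatives

variable {E : Type*} [NormedAddCommGroup E] [NormedSpace ℝ E] {f g : E × ℝ → ℝ} {e e' : ℝ}
  {v w p : E × ℝ}

lemma pd_congr_of_snd_pos (hfg : ∀ p, 0 < p.2 → f p = g p) (hp : 0 < p.2) :
    pd v f p = pd v g p := by
  have hev : f =ᶠ[𝓝 p] g := eventually_of_mem (isOpen_setOf_snd_pos.mem_nhds hp) hfg
  rw [pd, hev.fderiv_eq, pd]

lemma IsSymbol.pd_pd_add (hf : IsSymbol e f) (hg : IsSymbol e' g) (hp : 0 < p.2) :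
    _root_.pd w (_root_.pd v fun p ↦ f p + g p) p =
      _root_.pd w (_root_.pd v f) p + _root_.pd w (_root_.pd v g) p := by
  rw [pd_congr_of_snd_pos (fun p hp ↦ pd_add (hf.differentiableAt hp) (hg.differentiableAt hp)) hp,
    pd_add ((hf.pd v).differentiableAt hp) ((hg.pd v).differentiableAt hp)]

lemma IsSymbol.pd_pd_mul (hf : IsSymbol e f) (hg : IsSymbol e' g) (hp : 0 < p.2) :
    _root_.pd v (_root_.pd v fun p ↦ f p * g p) p =
      _root_.pd v (_root_.pd v f) p * g p + 2 * (_root_.pd v f p * _root_.pd v g p) +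
        f p * _root_.pd v (_root_.pd v g) p := by
  rw [pd_congr_of_snd_pos (fun p hp ↦ pd_mul (hf.differentiableAt hp) (hg.differentiableAt hp)) hp,
    pd_add (((hf.pd v).mul hg).differentiableAt hp) ((hf.mul (hg.pd v)).differentiableAt hp),
    pd_mul ((hf.pd v).differentiableAt hp) (hg.differentiableAt hp),
    pd_mul (hf.differentiableAt hp) ((hg.pd v).differentiableAt hp)]
  ring

end HalfSpaceDerivatives

section Laplacian

variable {n : ℕ} {f g : Pt n → ℝ} {e e' : ℝ} {p : Pt n} {i j : Fin (n - 1)}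

lemma lap_comp_add_right (a : Pt n) : lap n (fun p ↦ f (p + a)) p = lap n f (p + a) := by
  have hpd (v : Pt n) : pd v (fun p ↦ f (p + a)) = fun p ↦ pd v f (p + a) :=
    funext fun _ ↦ pd_comp_add_right a
  simp only [lap, hpd, pd_comp_add_right]

lemma IsSymbol.lap (hf : IsSymbol e f) : IsSymbol (e - 2) (lap n f) := by
  have hpd (v : Pt n) : IsSymbol (e - 2) (_root_.pd v (_root_.pd v f)) :=
    ((hf.pd v).pd v).mono (by linarith)
  exact (IsSymbol.sum _ fun i _ ↦ hpd (ez n i)).add (hpd (et n))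

lemma IsSymbol.lap_add (hf : IsSymbol e f) (hg : IsSymbol e' g) (hp : 0 < p.2) :
    _root_.lap n (fun p ↦ f p + g p) p = _root_.lap n f p + _root_.lap n g p := by
  simp only [_root_.lap, hf.pd_pd_add hg hp, Finset.sum_add_distrib]
  ring

lemma IsSymbol.lap_mul (hf : IsSymbol e f) (hg : IsSymbol e' g) (hp : 0 < p.2) :
    _root_.lap n (fun p ↦ f p * g p) p =
      _root_.lap n f p * g p + 2 * ((∑ i, _root_.pd (ez n i) f p * _root_.pd (ez n i) g p) +
        _root_.pd (et n) f p * _root_.pd (et n) g p) + f p * _root_.lap n g p := by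
  simp only [_root_.lap, hf.pd_pd_mul hg hp, Finset.sum_add_distrib, ← Finset.sum_mul,
    ← Finset.mul_sum]
  ring

/-- The Euler operator `z · ∇_z` in the horizontal variables. -/
def horizontalEuler {E : Type*} [NormedAddCommGroup E] [NormedSpace ℝ E] (f : E × ℝ → ℝ)
    (p : E × ℝ) : ℝ :=
  pd (p.1, 0) f p

lemma sum_coord_mul_pd_ez (f : Pt n → ℝ) (p : Pt n) :
    ∑ i, p.1 i * pd (ez n i) f p = horizontalEuler f p := by
  have hp : ((p.1, 0) : Pt n) = ∑ i, p.1 i • ez n i := by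
    refine Prod.ext ?_ ?_
    · ext j
      simp [ez, Prod.fst_sum, Pi.single_apply]
    · simp [ez, Prod.snd_sum]
  simp only [horizontalEuler, pd, hp, map_sum, map_smul, smul_eq_mul]

lemma isSymbol_coord (i : Fin (n - 1)) : IsSymbol 1 fun p : Pt n ↦ p.1 i :=
  .clm_fst (EuclideanSpace.proj i)

lemma pd_coord (v : Pt n) (i : Fin (n - 1)) : pd v (fun p ↦ p.1 i) p = v.1 i :=
  congrArg (· v) (((EuclideanSpace.proj i).comp (.fst ℝ _ ℝ)).hasFDerivAt (x := p)).fderiv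

end Laplacian

section Axial

variable {n : ℕ} {g : ℝ → ℝ → ℝ} {g' : ℝ} {p : Pt n} {i j : Fin (n - 1)}

lemma pd_horizontal_axial (hdiff : DifferentiableAt ℝ (axial g) p)
    (hg : HasDerivAt (fun q ↦ g q p.2) g' (‖p.1‖ ^ 2)) (w : EuclideanSpace ℝ (Fin (n - 1))) :
    pd (w, 0) (axial g) p = 2 * inner ℝ p.1 w * g' := by
  have hline : HasDerivAt (fun x : ℝ ↦ ‖p.1 + x • w‖ ^ 2) (2 * inner ℝ p.1 w) 0 := by
    refine (((hasDerivAt_id (0 : ℝ)).smul_const w).const_add p.1).norm_sq.congr_deriv ?_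
    simp
  refine pd_eq_of_hasLineDerivAt hdiff ?_
  rw [← add_zero p.1, ← zero_smul ℝ w] at hg
  refine ((hg.comp (0 : ℝ) hline).congr_of_eventuallyEq (.of_forall fun x ↦ ?_)).congr_deriv
    (mul_comm _ _)
  simp [axial]

lemma pd_et_axial (hdiff : DifferentiableAt ℝ (axial g) p)
    (hg : HasDerivAt (g (‖p.1‖ ^ 2)) g' p.2) : pd (et n) (axial g) p = g' := by
  refine pd_eq_of_hasLineDerivAt hdiff ?_
  rw [← add_zero p.2] at hg
  refine (hg.comp_const_add p.2 0).congr_of_eventuallyEq (.of_forall fun x ↦ ?_)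
  simp [axial, et]

namespace RadialJet.HasOrder

variable {J : RadialJet} {e : ℝ} (hJ : HasOrder (EuclideanSpace ℝ (Fin (n - 1))) J e)
include hJ

lemma pd_horizontal (hp : 0 < p.2) (w : EuclideanSpace ℝ (Fin (n - 1))) :
    pd (w, 0) (axial J.val) p = 2 * inner ℝ p.1 w * axial J.dq p :=
  pd_horizontal_axial (hJ.isSymbol.differentiableAt hp) (hJ.hasDerivAt_q (by positivity) hp) w

lemma pd_horizontal_dq (hp : 0 < p.2) (w : EuclideanSpace ℝ (Fin (n - 1))) :
    pd (w, 0) (axial J.dq) p = 2 * inner ℝ p.1 w * axial J.dqq p :=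
  pd_horizontal_axial (hJ.isSymbol_dq.differentiableAt hp) (hJ.hasDerivAt_dq (by positivity) hp) w

lemma pd_ez (hp : 0 < p.2) : pd (ez n i) (axial J.val) p = 2 * p.1 i * axial J.dq p := by
  rw [ez, hJ.pd_horizontal hp, EuclideanSpace.inner_single_right, one_mul, conj_trivial]

lemma pd_ez_dq (hp : 0 < p.2) : pd (ez n i) (axial J.dq) p = 2 * p.1 i * axial J.dqq p := by
  rw [ez, hJ.pd_horizontal_dq hp, EuclideanSpace.inner_single_right, one_mul, conj_trivial]

lemma horizontalEuler_axial (hp : 0 < p.2) :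
    horizontalEuler (axial J.val) p = 2 * ‖p.1‖ ^ 2 * axial J.dq p := by
  rw [horizontalEuler, hJ.pd_horizontal hp, real_inner_self_eq_norm_sq]

lemma horizontalEuler_axial_dq (hp : 0 < p.2) :
    horizontalEuler (axial J.dq) p = 2 * ‖p.1‖ ^ 2 * axial J.dqq p := by
  rw [horizontalEuler, hJ.pd_horizontal_dq hp, real_inner_self_eq_norm_sq]

lemma pd_et (hp : 0 < p.2) : pd (et n) (axial J.val) p = axial J.ds p :=
  pd_et_axial (hJ.isSymbol.differentiableAt hp) (hJ.hasDerivAt_s (by positivity) hp)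

lemma isSymbol_ds : IsSymbol (e - 1) (axial J.ds : Pt n → ℝ) :=
  (hJ.isSymbol.pd (et n)).congr fun _ hp ↦ (hJ.pd_et hp).symm

lemma pd_ez_ez (hp : 0 < p.2) :
    pd (ez n i) (pd (ez n j) (axial J.val)) p =
      (if i = j then 1 else 0) * (2 * axial J.dq p) + p.1 i * p.1 j * (4 * axial J.dqq p) := by
  have hfirst (p : Pt n) (hp : 0 < p.2) :
      pd (ez n j) (axial J.val) p = p.1 j * (2 * axial J.dq p) := by
    rw [hJ.pd_ez hp]
    ring
  have hdq := hJ.isSymbol_dq.const_mul 2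
  rw [pd_congr_of_snd_pos hfirst hp,
    pd_mul ((isSymbol_coord j).differentiableAt hp) (hdq.differentiableAt hp), pd_coord,
    pd_mul (differentiableAt_const _) (hJ.isSymbol_dq.differentiableAt hp), hJ.pd_ez_dq hp]
  simp only [pd, fderiv_const_apply, zero_apply, ez, PiLp.single_apply, eq_comm (a := j)]
  ring

lemma pd_et_et (hp : 0 < p.2) : pd (et n) (pd (et n) (axial J.val)) p = axial J.dss p := by
  rw [pd_congr_of_snd_pos (fun _ ↦ hJ.pd_et) hp]
  exact pd_et_axial (hJ.isSymbol_ds.differentiableAt hp) (hJ.hasDerivAt_ds (by positivity) hp)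

lemma lap_axial (hn : 1 ≤ n) (hp : 0 < p.2) :
    lap n (axial J.val) p =
      4 * ‖p.1‖ ^ 2 * axial J.dqq p + 2 * (n - 1) * axial J.dq p + axial J.dss p := by
  simp only [lap, hJ.pd_ez_ez hp, hJ.pd_et_et hp, if_true, Finset.sum_add_distrib,
    Finset.sum_const, Finset.card_univ, Fintype.card_fin, nsmul_eq_mul, Nat.cast_sub hn,
    Nat.cast_one, EuclideanSpace.real_norm_sq_eq, ← sq, ← Finset.sum_mul]
  ring

end RadialJet.HasOrder

end Axial

section QuadForm

/-- The quadratic form with coefficients `S i j`, not necessarily symmetric. -/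
def quadForm {ι : Type*} [Fintype ι] (S : ι → ι → ℝ) (z : EuclideanSpace ℝ ι) : ℝ :=
  ∑ i, ∑ j, S i j * z i * z j

/-- The quadrupole `(z, s) ↦ S(z, z) g(|z|², s)` with axially symmetric profile `g`. -/
def quadrupole {ι : Type*} [Fintype ι] (S : ι → ι → ℝ) (g : ℝ → ℝ → ℝ)
    (p : EuclideanSpace ℝ ι × ℝ) : ℝ :=
  quadForm S p.1 * axial g p

variable {n : ℕ} {S : Fin (n - 1) → Fin (n - 1) → ℝ} {p : Pt n} {i : Fin (n - 1)}

lemma isSymbol_quadForm (S : Fin (n - 1) → Fin (n - 1) → ℝ) :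
    IsSymbol 2 fun p : Pt n ↦ quadForm S p.1 :=
  .sum _ fun i _ ↦ .sum _ fun j _ ↦
    (((isSymbol_coord i).const_mul _).mul (isSymbol_coord j)).mono (by norm_num)

lemma pd_quadForm (v : Pt n) :
    pd v (fun p ↦ quadForm S p.1) p = ∑ i, ∑ j, S i j * (v.1 i * p.1 j + p.1 i * v.1 j) := by
  have hterm (i j : Fin (n - 1)) :
      pd v (fun p ↦ S i j * p.1 i * p.1 j) p = S i j * (v.1 i * p.1 j + p.1 i * v.1 j) := by
    rw [pd_mul (by fun_prop) (by fun_prop), pd_mul (by fun_prop) (by fun_prop), pd_coord, pd_coord]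
    simp only [pd, fderiv_const_apply, zero_apply]
    ring
  simp only [quadForm]
  rw [pd_sum fun i _ ↦ by fun_prop]
  refine Finset.sum_congr rfl fun i _ ↦ ?_
  rw [pd_sum fun j _ ↦ by fun_prop]
  exact Finset.sum_congr rfl fun j _ ↦ hterm i j

lemma pd_pd_quadForm (v : Pt n) :
    pd v (pd v fun p ↦ quadForm S p.1) p = 2 * quadForm S v.1 := by
  have hpd : (pd v fun p ↦ quadForm S p.1) =
      fun p ↦ ∑ i, ∑ j, S i j * (v.1 i * p.1 j + p.1 i * v.1 j) := funext fun _ ↦ pd_quadForm v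
  have hterm (i j : Fin (n - 1)) :
      pd v (fun p ↦ S i j * (v.1 i * p.1 j + p.1 i * v.1 j)) p = 2 * (S i j * v.1 i * v.1 j) := by
    rw [pd_mul (by fun_prop) (by fun_prop), pd_add (by fun_prop) (by fun_prop),
      pd_mul (by fun_prop) (by fun_prop), pd_mul (by fun_prop) (by fun_prop), pd_coord, pd_coord]
    simp only [pd, fderiv_const_apply, zero_apply]
    ring
  rw [hpd, quadForm, pd_sum fun i _ ↦ by fun_prop, Finset.mul_sum]
  refine Finset.sum_congr rfl fun i _ ↦ ?_
  rw [pd_sum fun j _ ↦ by fun_prop, Finset.mul_sum]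
  exact Finset.sum_congr rfl fun j _ ↦ hterm i j

lemma pd_et_quadForm : pd (et n) (fun p ↦ quadForm S p.1) p = 0 := by
  simp [pd_quadForm, et]

lemma lap_quadForm (hS : ∑ i, S i i = 0) : lap n (fun p ↦ quadForm S p.1) p = 0 := by
  have hez (i : Fin (n - 1)) : quadForm S (ez n i).1 = S i i := by
    simp [quadForm, ez]
  have het : quadForm S (et n).1 = 0 := by simp [quadForm, et]
  simp only [lap, pd_pd_quadForm, hez, het, ← Finset.mul_sum, hS, mul_zero, add_zero]

lemma horizontalEuler_quadForm :
    horizontalEuler (fun p ↦ quadForm S p.1) p = 2 * quadForm S p.1 := by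
  rw [horizontalEuler, pd_quadForm, quadForm]
  simp only [Finset.mul_sum]
  exact Finset.sum_congr rfl fun i _ ↦ Finset.sum_congr rfl fun j _ ↦ by ring

end QuadForm

section Quadrupole

/-- The operator on functions of `(q, s)` satisfying `Δ (S(z, z) g) = S(z, z) (reducedLaplacian g)`
for trace-free `S`. -/
def RadialJet.reducedLaplacian (n : ℕ) (J : RadialJet) (q s : ℝ) : ℝ :=
  4 * q * J.dqq q s + 2 * (n + 3) * J.dq q s + J.dss q s

/-- The properties of `V = Σ S(z, z) g(|z|², s)` and `W = Σ S(z, z) ∂_q g(|z|², s)`, for trace-free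
quadratic forms `S`, on which the sign of `∫ V ΔV` depends. -/
structure IsQuadrupolePair (n : ℕ) (e : ℝ) (V W : Pt n → ℝ) : Prop where
  isSymbol : IsSymbol e V
  isSymbol_dq : IsSymbol (e - 2) W
  horizontalEuler_eq : ∀ p, 0 < p.2 → horizontalEuler V p = 2 * V p + 2 * ‖p.1‖ ^ 2 * W p
  lap_eq : ∀ p, 0 < p.2 →
    lap n V p = 2 * horizontalEuler W p + 2 * (n + 1) * W p + pd (et n) (pd (et n) V) p

lemma IsQuadrupolePair.add {n : ℕ} {e : ℝ} {V V' W W' : Pt n → ℝ} (h : IsQuadrupolePair n e V W)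
    (h' : IsQuadrupolePair n e V' W') :
    IsQuadrupolePair n e (fun p ↦ V p + V' p) fun p ↦ W p + W' p where
  isSymbol := h.isSymbol.add h'.isSymbol
  isSymbol_dq := h.isSymbol_dq.add h'.isSymbol_dq
  horizontalEuler_eq p hp := by
    rw [horizontalEuler,
      pd_add (h.isSymbol.differentiableAt hp) (h'.isSymbol.differentiableAt hp),
      ← horizontalEuler, ← horizontalEuler]
    linear_combination h.horizontalEuler_eq p hp + h'.horizontalEuler_eq p hp
  lap_eq p hp := by
    rw [h.isSymbol.lap_add h'.isSymbol hp, h.isSymbol.pd_pd_add h'.isSymbol hp, horizontalEuler,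
      pd_add (h.isSymbol_dq.differentiableAt hp) (h'.isSymbol_dq.differentiableAt hp),
      ← horizontalEuler, ← horizontalEuler]
    linear_combination h.lap_eq p hp + h'.lap_eq p hp

namespace RadialJet.HasOrder

variable {n : ℕ} {J : RadialJet} {e : ℝ} {S : Fin (n - 1) → Fin (n - 1) → ℝ} {p : Pt n}
  (hJ : HasOrder (EuclideanSpace ℝ (Fin (n - 1))) J e)
include hJ

lemma isSymbol_quadrupole (S : Fin (n - 1) → Fin (n - 1) → ℝ) :
    IsSymbol (2 + e) (quadrupole S J.val : Pt n → ℝ) :=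
  (isSymbol_quadForm S).mul hJ.isSymbol

lemma pd_et_quadrupole (hp : 0 < p.2) :
    pd (et n) (quadrupole S J.val) p = quadrupole S J.ds p := by
  refine (pd_mul ((isSymbol_quadForm S).differentiableAt hp)
    (hJ.isSymbol.differentiableAt hp)).trans ?_
  rw [pd_et_quadForm, hJ.pd_et hp, zero_mul, zero_add, quadrupole]

lemma pd_et_et_quadrupole (hp : 0 < p.2) :
    pd (et n) (pd (et n) (quadrupole S J.val)) p = quadrupole S J.dss p := by
  rw [pd_congr_of_snd_pos (fun _ ↦ hJ.pd_et_quadrupole) hp]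
  refine (pd_mul ((isSymbol_quadForm S).differentiableAt hp)
    (hJ.isSymbol_ds.differentiableAt hp)).trans ?_
  rw [pd_et_quadForm, zero_mul, zero_add, quadrupole, ← hJ.pd_et_et hp,
    pd_congr_of_snd_pos (fun _ ↦ hJ.pd_et) hp]

lemma lap_quadrupole (hn : 1 ≤ n) (hS : ∑ i, S i i = 0) (hp : 0 < p.2) :
    lap n (quadrupole S J.val) p = quadrupole S (J.reducedLaplacian n) p := by
  refine ((isSymbol_quadForm S).lap_mul hJ.isSymbol hp).trans ?_
  have hcross : ∑ i, pd (ez n i) (fun p ↦ quadForm S p.1) p * pd (ez n i) (axial J.val) p =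
      4 * quadForm S p.1 * axial J.dq p := by
    calc _ = 2 * axial J.dq p * horizontalEuler (fun p ↦ quadForm S p.1) p := by
          rw [← sum_coord_mul_pd_ez, Finset.mul_sum]
          exact Finset.sum_congr rfl fun i _ ↦ by rw [hJ.pd_ez hp]; ring
      _ = _ := by rw [horizontalEuler_quadForm]; ring
  rw [lap_quadForm hS, hcross, pd_et_quadForm, hJ.lap_axial hn hp]
  simp only [quadrupole, axial, reducedLaplacian]
  ring

lemma isQuadrupolePair (hn : 1 ≤ n) (hS : ∑ i, S i i = 0) :
    IsQuadrupolePair n (2 + e) (quadrupole S J.val) (quadrupole S J.dq) where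
  isSymbol := hJ.isSymbol_quadrupole S
  isSymbol_dq := ((isSymbol_quadForm S).mul hJ.isSymbol_dq).mono (by linarith)
  horizontalEuler_eq p hp := by
    refine (pd_mul ((isSymbol_quadForm S).differentiableAt hp)
      (hJ.isSymbol.differentiableAt hp)).trans ?_
    rw [← horizontalEuler, ← horizontalEuler, horizontalEuler_quadForm,
      hJ.horizontalEuler_axial hp, quadrupole, quadrupole]
    ring
  lap_eq p hp := by
    have heuler : horizontalEuler (quadrupole S J.dq) p =
        2 * quadForm S p.1 * axial J.dq p +
          quadForm S p.1 * (2 * ‖p.1‖ ^ 2 * axial J.dqq p) := by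
      refine (pd_mul ((isSymbol_quadForm S).differentiableAt hp)
        (hJ.isSymbol_dq.differentiableAt hp)).trans ?_
      rw [← horizontalEuler, ← horizontalEuler, horizontalEuler_quadForm,
        hJ.horizontalEuler_axial_dq hp]
    rw [hJ.lap_quadrupole hn hS hp, heuler, hJ.pd_et_et_quadrupole hp]
    simp only [quadrupole, axial, reducedLaplacian]
    ring

end RadialJet.HasOrder

end Quadrupole

section Profiles

namespace RadialJet

variable {n : ℕ} {q s : ℝ}

lemma reducedLaplacian_add (J K : RadialJet) :
    (J + K).reducedLaplacian n q s = J.reducedLaplacian n q s + K.reducedLaplacian n q s := by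
  simp only [reducedLaplacian, add_dq, add_dqq, add_dss]
  ring

lemma reducedLaplacian_smul (c : ℝ) (J : RadialJet) :
    (c • J).reducedLaplacian n q s = c * J.reducedLaplacian n q s := by
  simp only [reducedLaplacian, smul_dq, smul_dqq, smul_dss]
  ring

lemma reducedLaplacian_mul (J K : RadialJet) :
    (J * K).reducedLaplacian n q s =
      J.reducedLaplacian n q s * K.val q s + J.val q s * K.reducedLaplacian n q s +
        8 * q * J.dq q s * K.dq q s + 2 * J.ds q s * K.ds q s := by
  simp only [reducedLaplacian, mul_dq, mul_dqq, mul_dss]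
  ring

lemma reducedLaplacian_height : height.reducedLaplacian n q s = 0 := by
  simp [reducedLaplacian]

lemma reducedLaplacian_normSqRpow (a : ℝ) (hr : 0 < q + s ^ 2) :
    (normSqRpow a).reducedLaplacian n q s = 2 * a * (2 * a + n + 2) * (q + s ^ 2) ^ (a - 1) := by
  have hpow : (q + s ^ 2) ^ (a - 1) = (q + s ^ 2) ^ (a - 2) * (q + s ^ 2) := by
    rw [← Real.rpow_add_one hr.ne']
    ring_nf
  simp only [reducedLaplacian, normSqRpow_dq, normSqRpow_dqq, normSqRpow_dss, hpow]
  ring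

lemma reducedLaplacian_pole (hn : 0 < n) (hq : 0 ≤ q) (hs : 0 < s) :
    (pole (n / 2 + 1)).reducedLaplacian n q s = 0 := by
  have hred := polePotential_reduction (b := n / 2 + 1 + 1) (q := q) (s := s)
    (lt_add_of_pos_left 1 (by positivity)) hq hs
  simp only [add_assoc _ (1 : ℝ) 1, add_assoc _ (2 : ℝ) 1, one_add_one_eq_two] at hred
  simp only [reducedLaplacian, pole_dq, pole_dqq, pole_dss, add_assoc _ (1 : ℝ) 1, ← neg_add',
    add_assoc _ (1 : ℝ) 2, add_comm (1 : ℝ) 2, one_add_one_eq_two]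
  linear_combination 2 * (n / 2 + 1) * hred

/-- The first moment `n ∫₀^∞ x (q + (s + x) ^ 2) ^ (-(n / 2 + 1)) dx`. -/
def firstMoment (n : ℕ) : RadialJet :=
  normSqRpow (-(n / 2)) + (-n : ℝ) • (height * pole (n / 2 + 1))

/-- The second moment `n (n - 1) ∫₀^∞ x ^ 2 (q + (s + x) ^ 2) ^ (-(n / 2 + 1)) dx`. -/
def secondMoment (n : ℕ) : RadialJet :=
  (n : ℝ) • ((normSqRpow 1 + (n - 2 : ℝ) • (height * height)) * pole (n / 2 + 1)) +
    (-(n - 2) : ℝ) • (height * normSqRpow (-(n / 2)))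

/-- The combination of axial moments annihilated by the reduced Laplacian whose image under the
boundary operator is a multiple of `|y| ^ (2 - n)`. -/
def corrector (n : ℕ) : RadialJet :=
  (2 * n ^ 2 : ℝ) • pole (n / 2 + 1) + ((3 * n - 2 : ℝ) • firstMoment n + secondMoment n)

/-- The boundary operator `|y|² ∂_s + n` at height `s = 1`. -/
def boundaryOp (n : ℕ) (J : RadialJet) (q : ℝ) : ℝ := (q + 1) * J.ds q 1 + n * J.val q 1

/-- The profile `J` corrected to satisfy the homogeneous boundary condition, if the boundary
operator maps it to `c |y| ^ (2 - n)`. -/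
def corrected (n : ℕ) (c : ℝ) (J : RadialJet) : RadialJet :=
  J + (c / (2 * (n - 1))) • corrector n

/-- The profile of the quadrupole with coefficients `Σ_i A_{ikil}`, for the right-hand side
`((n - 2) / 3) |y| ^ (-n)`. -/
def traceProfile (n : ℕ) : RadialJet :=
  corrected n (-1 / 6) ((-1 / 12 : ℝ) • normSqRpow (1 - n / 2))

/-- The profile of the quadrupole with coefficients `B_{ij}`, for the right-hand side
`-n (n - 2) (s - 1)² |y| ^ (-n - 2)`. -/
def normalProfile (n : ℕ) : RadialJet :=
  corrected n ((3 - n) / 6)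
    (((1 / 12 : ℝ) • normSqRpow (1 - n / 2) +
        ((n - 2) / 6 : ℝ) • (height * (height * normSqRpow (-(n / 2))))) +
      ((-(n - 2) / 2 : ℝ) • (height * normSqRpow (-(n / 2))) +
        ((n - 2) / 2 : ℝ) • normSqRpow (-(n / 2))))

lemma reducedLaplacian_firstMoment (hn : 0 < n) (hq : 0 ≤ q) (hs : 0 < s) :
    (firstMoment n).reducedLaplacian n q s = 0 := by
  have hr : 0 < q + s ^ 2 := by positivity
  simp only [firstMoment, reducedLaplacian_add, reducedLaplacian_smul, reducedLaplacian_mul,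
    reducedLaplacian_height, reducedLaplacian_normSqRpow _ hr, reducedLaplacian_pole hn hq hs]
  simp only [height_ds, pole_ds, height_dq, Pi.zero_apply, neg_add']
  ring

lemma reducedLaplacian_secondMoment (hn : 0 < n) (hq : 0 ≤ q) (hs : 0 < s) :
    (secondMoment n).reducedLaplacian n q s = 0 := by
  have hr : 0 < q + s ^ 2 := by positivity
  have hred := polePotential_reduction (b := n / 2 + 1) (q := q) (s := s)
    (lt_add_of_pos_left 1 (by positivity)) hq hs
  simp only [secondMoment, reducedLaplacian_add, reducedLaplacian_smul, reducedLaplacian_mul,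
    reducedLaplacian_height, reducedLaplacian_normSqRpow _ hr, reducedLaplacian_pole hn hq hs]
  rw [neg_add'] at hred
  simp only [neg_add', sub_self, Real.rpow_zero, Real.rpow_one, add_dq, add_val, add_ds,
    smul_dq, smul_val, smul_ds, mul_dq, mul_val, mul_ds, height_dq, height_val, height_ds,
    normSqRpow_dq, normSqRpow_val, normSqRpow_ds, pole_dq, pole_val, pole_ds, Pi.zero_apply]
  linear_combination -4 * n * hred

lemma reducedLaplacian_corrected (hn : 0 < n) (c : ℝ) (J : RadialJet) (hq : 0 ≤ q) (hs : 0 < s) :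
    (corrected n c J).reducedLaplacian n q s = J.reducedLaplacian n q s := by
  simp only [corrected, corrector, reducedLaplacian_add, reducedLaplacian_smul,
    reducedLaplacian_pole hn hq hs, reducedLaplacian_firstMoment hn hq hs,
    reducedLaplacian_secondMoment hn hq hs, mul_zero, add_zero]

lemma reducedLaplacian_traceProfile (hn : 0 < n) (hq : 0 ≤ q) (hs : 0 < s) :
    (traceProfile n).reducedLaplacian n q s = (n - 2) / 3 * (q + s ^ 2) ^ (-(n / 2) : ℝ) := by
  rw [traceProfile, reducedLaplacian_corrected hn _ _ hq hs, reducedLaplacian_smul,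
    reducedLaplacian_normSqRpow _ (by positivity), show (1 - n / 2 - 1 : ℝ) = -(n / 2) by ring]
  ring

lemma reducedLaplacian_normalProfile (hn : 0 < n) (hq : 0 ≤ q) (hs : 0 < s) :
    (normalProfile n).reducedLaplacian n q s =
      -(n * (n - 2) * (s - 1) ^ 2 * (q + s ^ 2) ^ (-(n / 2) - 1 : ℝ)) := by
  have hr : 0 < q + s ^ 2 := by positivity
  rw [normalProfile, reducedLaplacian_corrected hn _ _ hq hs]
  simp only [reducedLaplacian_add, reducedLaplacian_smul, reducedLaplacian_mul,
    reducedLaplacian_height, reducedLaplacian_normSqRpow _ hr, mul_ds, height_ds, height_val,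
    normSqRpow_ds, normSqRpow_val, height_dq, Pi.zero_apply,
    show (1 - n / 2 - 1 : ℝ) = -(n / 2) by ring]
  ring

lemma boundaryOp_add (J K : RadialJet) :
    boundaryOp n (J + K) q = boundaryOp n J q + boundaryOp n K q := by
  simp only [boundaryOp, add_ds, add_val]
  ring

lemma boundaryOp_smul (c : ℝ) (J : RadialJet) :
    boundaryOp n (c • J) q = c * boundaryOp n J q := by
  simp only [boundaryOp, smul_ds, smul_val]
  ring

lemma boundaryOp_height_mul (J : RadialJet) :
    boundaryOp n (height * J) q = boundaryOp n J q + (q + 1) * J.val q 1 := by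
  simp only [boundaryOp, mul_ds, mul_val, height_val, height_ds]
  ring

lemma boundaryOp_normSqRpow (a : ℝ) (hq : 0 ≤ q) :
    boundaryOp n (normSqRpow a) q = (2 * a + n) * (q + 1) ^ a := by
  have hr : q + 1 ≠ 0 := by positivity
  simp only [boundaryOp, normSqRpow_ds, normSqRpow_val, one_pow, Real.rpow_sub_one hr]
  field_simp

lemma boundaryOp_corrector (hq : 0 ≤ q) :
    boundaryOp n (corrector n) q = -(2 * (n - 1)) * (q + 1) ^ (1 - n / 2 : ℝ) := by
  have hr : q + 1 ≠ 0 := by positivity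
  simp only [boundaryOp, corrector, firstMoment, secondMoment, add_val, add_ds, smul_val, smul_ds,
    mul_val, mul_ds, height_val, height_ds, normSqRpow_val, normSqRpow_ds, pole_val, pole_ds,
    one_pow, sub_self, Real.rpow_zero, Real.rpow_one, neg_add', sub_eq_neg_add (1 : ℝ),
    Real.rpow_sub_one hr, Real.rpow_add_one hr]
  field_simp
  ring

lemma boundaryOp_corrected {c : ℝ} {J : RadialJet} (hn : n ≠ 1) (hq : 0 ≤ q)
    (hJ : boundaryOp n J q = c * (q + 1) ^ (1 - n / 2 : ℝ)) :
    boundaryOp n (corrected n c J) q = 0 := by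
  have hn' : (n - 1 : ℝ) ≠ 0 := sub_ne_zero.2 (mod_cast hn)
  rw [corrected, boundaryOp_add, boundaryOp_smul, boundaryOp_corrector hq, hJ]
  field_simp
  ring

lemma boundaryOp_traceProfile (hn : n ≠ 1) (hq : 0 ≤ q) : boundaryOp n (traceProfile n) q = 0 := by
  refine boundaryOp_corrected hn hq ?_
  rw [boundaryOp_smul, boundaryOp_normSqRpow _ hq]
  ring

lemma boundaryOp_normalProfile (hn : n ≠ 1) (hq : 0 ≤ q) :
    boundaryOp n (normalProfile n) q = 0 := by
  refine boundaryOp_corrected hn hq ?_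
  have hr : q + 1 ≠ 0 := by positivity
  simp only [boundaryOp_add, boundaryOp_smul, boundaryOp_height_mul, boundaryOp_normSqRpow _ hq,
    mul_val, height_val, normSqRpow_val, one_pow, sub_eq_neg_add (1 : ℝ), Real.rpow_add_one hr]
  ring

namespace HasOrder

variable {E : Type*} [NormedAddCommGroup E] [InnerProductSpace ℝ E] [FiniteDimensional ℝ E]

protected lemma corrector (hn : 0 < n) : HasOrder E (corrector n) (2 - n) := by
  have hb : (1 : ℝ) < n / 2 + 1 := by norm_cast; simpa
  have hpole : HasOrder E (pole (n / 2 + 1)) (-1 - n) := (HasOrder.pole hb).mono (by linarith)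
  have hpow : HasOrder E (normSqRpow (-(n / 2))) (-n) := (HasOrder.normSqRpow _).mono (by linarith)
  have hquad : HasOrder E (normSqRpow 1 + (n - 2 : ℝ) • (height * height)) 2 :=
    ((HasOrder.normSqRpow 1).mono (by norm_num)).add
      (.smul _ ((HasOrder.height.mul .height).mono (by norm_num)))
  have hfirst : HasOrder E (firstMoment n) (2 - n) :=
    (hpow.mono (by linarith)).add (.smul _ ((HasOrder.height.mul hpole).mono (by linarith)))
  have hsecond : HasOrder E (secondMoment n) (2 - n) :=
    (HasOrder.smul _ ((hquad.mul hpole).mono (by linarith))).add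
      (.smul _ ((HasOrder.height.mul hpow).mono (by linarith)))
  exact (HasOrder.smul _ (hpole.mono (by linarith))).add ((HasOrder.smul _ hfirst).add hsecond)

protected lemma corrected {J : RadialJet} (hn : 0 < n) (hJ : HasOrder E J (2 - n)) (c : ℝ) :
    HasOrder E (corrected n c J) (2 - n) :=
  hJ.add (.smul _ (.corrector hn))

protected lemma traceProfile (hn : 0 < n) : HasOrder E (traceProfile n) (2 - n) :=
  .corrected hn (.smul _ ((HasOrder.normSqRpow _).mono (by linarith))) _

protected lemma normalProfile (hn : 0 < n) : HasOrder E (normalProfile n) (2 - n) := by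
  have hpow : HasOrder E (normSqRpow (-(n / 2))) (-n) := (HasOrder.normSqRpow _).mono (by linarith)
  have hheight : HasOrder E (height * normSqRpow (-(n / 2))) (1 - n) :=
    (HasOrder.height.mul hpow).mono (by linarith)
  refine .corrected hn (.add (.add (.smul _ ?_) (.smul _ ?_)) (.add (.smul _ ?_) (.smul _ ?_))) _
  · exact (HasOrder.normSqRpow _).mono (by linarith)
  · exact (HasOrder.height.mul hheight).mono (by linarith)
  · exact hheight.mono (by linarith)
  · exact hpow.mono (by linarith)

end HasOrder

end RadialJet

end Profiles

section SourceTerm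

variable {ι : Type*} [Fintype ι]

/-- The quartic form `Σ A_{ikjl} z_i z_k z_j z_l`. -/
def quarticForm (A : ι → ι → ι → ι → ℝ) (z : EuclideanSpace ℝ ι) : ℝ :=
  quadForm (fun i j ↦ quadForm (fun k l ↦ A i k j l) z) z

/-- The contraction `Σ_i A_{ikil}`, the Ricci tensor of a curvature tensor `A`. -/
def partialTrace (A : ι → ι → ι → ι → ℝ) (k l : ι) : ℝ := ∑ i, A i k i l

lemma quarticForm_eq_zero {A : ι → ι → ι → ι → ℝ} (hA : ∀ i k j l, A i k j l = -A k i j l)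
    (z : EuclideanSpace ℝ ι) : quarticForm A z = 0 := by
  have hswap : quarticForm A z = ∑ i, ∑ k, ∑ j, ∑ l, A i k j l * z k * z l * z i * z j := by
    simp only [quarticForm, quadForm, Finset.sum_mul]
    exact Finset.sum_congr rfl fun _ _ ↦ Finset.sum_comm
  have hneg : quarticForm A z = -quarticForm A z := by
    calc quarticForm A z = ∑ k, ∑ i, ∑ j, ∑ l, A i k j l * z k * z l * z i * z j := by
          rw [hswap, Finset.sum_comm]
      _ = -quarticForm A z := by
          simp only [hswap, ← Finset.sum_neg_distrib]
          refine Finset.sum_congr rfl fun k _ ↦ Finset.sum_congr rfl fun i _ ↦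
            Finset.sum_congr rfl fun j _ ↦ Finset.sum_congr rfl fun l _ ↦ ?_
          rw [hA i k j l]
          ring
  linarith

lemma quadForm_mul_add_mul (S T : ι → ι → ℝ) (a b : ℝ) (z : EuclideanSpace ℝ ι) :
    quadForm (fun i j ↦ a * S i j + T i j * b) z = a * quadForm S z + b * quadForm T z := by
  simp only [quadForm, Finset.mul_sum, ← Finset.sum_add_distrib]
  exact Finset.sum_congr rfl fun i _ ↦ Finset.sum_congr rfl fun j _ ↦ by ring

lemma sum_partialTrace (A : ι → ι → ι → ι → ℝ) :
    ∑ k, partialTrace A k k = ∑ i, ∑ k, A i k i k :=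
  Finset.sum_comm

lemma sum_quadForm_diag (A : ι → ι → ι → ι → ℝ) (z : EuclideanSpace ℝ ι) :
    ∑ i, quadForm (fun k l ↦ A i k i l) z = quadForm (partialTrace A) z := by
  simp only [quadForm, partialTrace, Finset.sum_mul]
  rw [Finset.sum_comm]
  exact Finset.sum_congr rfl fun _ _ ↦ Finset.sum_comm

lemma sum_mul_ite_add_mul [DecidableEq ι] (S : ι → ι → ℝ) (z : EuclideanSpace ℝ ι) (α β : ℝ) :
    ∑ i, ∑ j, S i j * ((if i = j then 1 else 0) * α + z i * z j * β) =
      α * ∑ i, S i i + β * quadForm S z := by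
  simp only [mul_add, Finset.sum_add_distrib, quadForm, Finset.mul_sum]
  congr 1
  · refine Finset.sum_congr rfl fun i _ ↦ ?_
    simp [mul_comm α]
  · exact Finset.sum_congr rfl fun i _ ↦ Finset.sum_congr rfl fun j _ ↦ by ring

variable {n : ℕ} {A : Fin (n - 1) → Fin (n - 1) → Fin (n - 1) → Fin (n - 1) → ℝ}
  {B : Fin (n - 1) → Fin (n - 1) → ℝ} {p : Pt n}

lemma stdBubble_eq_axial (n : ℕ) :
    stdBubble n = fun p ↦ axial (RadialJet.normSqRpow (1 - n / 2)).val (p + et n) := by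
  funext p
  simp only [stdBubble, axial, RadialJet.normSqRpow_val, et, Prod.fst_add, Prod.snd_add, add_zero]
  ring_nf

lemma pd_ez_ez_stdBubble (hp : 0 < p.2) (i j : Fin (n - 1)) :
    pd (ez n i) (pd (ez n j) (stdBubble n)) p =
      (if i = j then 1 else 0) * (-(n - 2) * (‖p.1‖ ^ 2 + (p.2 + 1) ^ 2) ^ (-(n / 2) : ℝ)) +
        p.1 i * p.1 j * (n * (n - 2) * (‖p.1‖ ^ 2 + (p.2 + 1) ^ 2) ^ (-(n / 2) - 1 : ℝ)) := by
  have hshift : pd (ez n j) (stdBubble n) =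
      fun p ↦ pd (ez n j) (axial (RadialJet.normSqRpow (1 - n / 2)).val) (p + et n) := by
    rw [stdBubble_eq_axial]
    exact funext fun _ ↦ pd_comp_add_right _
  have hp' : 0 < (p + et n).2 := by
    simp only [et, Prod.snd_add]
    positivity
  rw [hshift, pd_comp_add_right, (RadialJet.HasOrder.normSqRpow _).pd_ez_ez hp']
  simp only [axial, RadialJet.normSqRpow_dq, RadialJet.normSqRpow_dqq, et, Prod.fst_add,
    Prod.snd_add, add_zero]
  ring_nf

lemma fAB_eq (hA : ∀ z, quarticForm A z = 0) (hB : ∑ i, B i i = 0) (hp : 0 < p.2) :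
    fAB n A B p =
      -((n - 2) / 3 * (‖p.1‖ ^ 2 + (p.2 + 1) ^ 2) ^ (-(n / 2) : ℝ)) *
          quadForm (partialTrace A) p.1 +
        n * (n - 2) * p.2 ^ 2 * (‖p.1‖ ^ 2 + (p.2 + 1) ^ 2) ^ (-(n / 2) - 1 : ℝ) *
          quadForm B p.1 := by
  set S : Fin (n - 1) → Fin (n - 1) → ℝ := fun i j ↦
    1 / 3 * quadForm (fun k l ↦ A i k j l) p.1 + B i j * p.2 ^ 2 with hS
  have htrace : ∑ i, S i i = 1 / 3 * quadForm (partialTrace A) p.1 := by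
    simp only [hS, Finset.sum_add_distrib, ← Finset.mul_sum, ← Finset.sum_mul, sum_quadForm_diag,
      hB, zero_mul, add_zero]
  have hform : quadForm S p.1 = p.2 ^ 2 * quadForm B p.1 := by
    rw [hS, quadForm_mul_add_mul, ← quarticForm, hA, mul_zero, zero_add]
  have hfAB : fAB n A B p = ∑ i, ∑ j, S i j * pd (ez n i) (pd (ez n j) (stdBubble n)) p := rfl
  rw [hfAB]
  simp only [pd_ez_ez_stdBubble hp]
  rw [sum_mul_ite_add_mul, htrace, hform]
  ring

end SourceTerm

section Integration

lemma rpow_le_two_rpow_mul {x y e : ℝ} (hx : 0 < x) (hxy : x ≤ 2 * y) (he : e ≤ 0) :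
    y ^ e ≤ 2 ^ (-e) * x ^ e := by
  calc y ^ e ≤ (2⁻¹ * x) ^ e := Real.rpow_le_rpow_of_nonpos (by positivity) (by linarith) he
    _ = 2 ^ (-e) * x ^ e := by
        rw [Real.mul_rpow (by norm_num) hx.le, Real.inv_rpow (by norm_num),
          Real.rpow_neg (by norm_num)]

lemma restrict_setOf_one_lt_snd {E : Type*} [MeasurableSpace E] (μ : Measure E) [SFinite μ] :
    (μ.prod volume).restrict {p : E × ℝ | 1 < p.2} = μ.prod (volume.restrict (Ioi 1)) := by
  rw [show {p : E × ℝ | 1 < p.2} = univ ×ˢ Ioi 1 by ext; simp, ← Measure.prod_restrict,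
    Measure.restrict_univ]

namespace IsSymbol

variable {E : Type*} [NormedAddCommGroup E] [NormedSpace ℝ E] {f : E × ℝ → ℝ} {e : ℝ}

lemma exists_norm_le (hf : IsSymbol e f) (he : e ≤ 0) :
    ∃ C, ∀ p : E × ℝ, 1 ≤ p.2 → ‖f p‖ ≤ C * (1 + ‖p‖) ^ e := by
  obtain ⟨C, hC⟩ := hf.exists_bound 0
  refine ⟨|C| * 2 ^ (-e), fun p hp ↦ ?_⟩
  have hnorm : 1 ≤ ‖p‖ := one_le_norm_of_one_le_snd hp
  calc ‖f p‖ ≤ C * ‖p‖ ^ e := by simpa using hC p hp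
    _ ≤ |C| * (2 ^ (-e) * (1 + ‖p‖) ^ e) := by
        gcongr
        · exact le_abs_self C
        · exact rpow_le_two_rpow_mul (by positivity) (by linarith) he
    _ = |C| * 2 ^ (-e) * (1 + ‖p‖) ^ e := by ring

lemma continuousAt (hf : IsSymbol e f) {p : E × ℝ} (hp : 0 < p.2) : ContinuousAt f p :=
  (hf.contDiffAt p hp).continuousAt

lemma norm_comp_le {X : Type*} [NormedAddCommGroup X] (hf : IsSymbol e f) (he : e ≤ 0) :
    ∃ C, ∀ (i : X → E × ℝ) (x : X), 1 ≤ (i x).2 → ‖x‖ ≤ ‖i x‖ → ‖f (i x)‖ ≤ C * (1 + ‖x‖) ^ e := by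
  obtain ⟨C, hC⟩ := hf.exists_norm_le he
  refine ⟨|C|, fun i x hx hnorm ↦ (hC _ hx).trans ?_⟩
  gcongr ?_ * ?_
  · exact le_abs_self C
  · exact Real.rpow_le_rpow_of_nonpos (by positivity) (by gcongr) he

lemma integrableOn_comp {X : Type*} [NormedAddCommGroup X] [NormedSpace ℝ X]
    [FiniteDimensional ℝ X] [MeasurableSpace X] [BorelSpace X] {ν : Measure X}
    [ν.IsAddHaarMeasure] (hf : IsSymbol e f) (he : e < -Module.finrank ℝ X) {i : X → E × ℝ}
    (hi : Continuous i) {s : Set X} (hs : MeasurableSet s) (hsnd : ∀ x ∈ s, 1 ≤ (i x).2)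
    (hnorm : ∀ x ∈ s, ‖x‖ ≤ ‖i x‖) : IntegrableOn (fun x ↦ f (i x)) s ν := by
  obtain ⟨C, hC⟩ := hf.norm_comp_le (X := X)
    (he.le.trans (neg_nonpos.2 (Nat.cast_nonneg _)))
  have hint : Integrable (fun x : X ↦ C * (1 + ‖x‖) ^ (- -e)) ν :=
    (integrable_one_add_norm (lt_neg.1 he)).const_mul C
  rw [neg_neg] at hint
  refine hint.integrableOn.mono' (ContinuousOn.aestronglyMeasurable (fun x hx ↦ ?_) hs)
    ((ae_restrict_iff' hs).2 (.of_forall fun x hx ↦ hC i x (hsnd x hx) (hnorm x hx)))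
  exact ((hf.continuousAt (one_pos.trans_le (hsnd x hx))).comp hi.continuousAt).continuousWithinAt

lemma integrableOn_vertical (hf : IsSymbol e f) (he : e < -1) (z : E) :
    IntegrableOn (fun s ↦ f (z, s)) (Ioi 1) :=
  hf.integrableOn_comp (by simpa using he) (by fun_prop) measurableSet_Ioi (fun _ hs ↦ hs.le)
    fun s _ ↦ norm_snd_le (z, s)

lemma tendsto_vertical (hf : IsSymbol e f) (he : e < 0) (z : E) :
    Tendsto (fun s ↦ f (z, s)) atTop (𝓝 0) := by
  obtain ⟨C, hC⟩ := hf.norm_comp_le (X := ℝ) he.le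
  have hlim : Tendsto (fun s : ℝ ↦ C * (1 + ‖s‖) ^ e) atTop (𝓝 0) := by
    have h := (tendsto_rpow_neg_atTop (neg_pos.2 he)).comp
      (tendsto_atTop_add_const_left atTop (1 : ℝ) tendsto_norm_atTop_atTop)
    simpa using h.const_mul C
  exact squeeze_zero_norm' ((eventually_ge_atTop 1).mono fun s hs ↦
    hC (fun s ↦ (z, s)) s hs (norm_snd_le (z, s))) hlim

lemma integral_Ioi_pd_vertical (hf : IsSymbol e f) (he : e < 0) (z : E) :
    ∫ s in Ioi 1, _root_.pd (0, 1) f (z, s) = -f (z, 1) := by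
  have hderiv (s : ℝ) (hs : s ∈ Ici 1) :
      HasDerivAt (fun s ↦ f (z, s)) (_root_.pd (0, 1) f (z, s)) s :=
    (hf.differentiableAt (p := (z, s)) (one_pos.trans_le hs)).hasFDerivAt.comp_hasDerivAt s
      ((hasDerivAt_const s z).prodMk (hasDerivAt_id s))
  rw [integral_Ioi_of_hasDerivAt_of_tendsto' hderiv
    ((hf.pd (0, 1)).integrableOn_vertical (by linarith) z) (hf.tendsto_vertical he z), zero_sub]

variable [FiniteDimensional ℝ E] [MeasurableSpace E] [BorelSpace E] (μ : Measure E)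
  [μ.IsAddHaarMeasure]

lemma integrableOn_halfSpace (hf : IsSymbol e f) (he : e < -(Module.finrank ℝ E + 1)) :
    IntegrableOn f {p | 1 < p.2} (μ.prod volume) :=
  hf.integrableOn_comp (by simpa using he) continuous_id
    (isOpen_lt continuous_const continuous_snd).measurableSet (fun _ hp ↦ le_of_lt hp)
    fun _ _ ↦ le_rfl

lemma integrable_slice (hf : IsSymbol e f) (he : e < -Module.finrank ℝ E) {s : ℝ} (hs : 1 ≤ s) :
    Integrable (fun z ↦ f (z, s)) μ :=
  integrableOn_univ.1 <| hf.integrableOn_comp he (by fun_prop) .univ (fun _ _ ↦ hs)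
    fun z _ ↦ norm_fst_le (z, s)

lemma integral_slice_pd_horizontal (hf : IsSymbol e f) (he : e < -Module.finrank ℝ E) (w : E)
    {s : ℝ} (hs : 1 ≤ s) : ∫ z, _root_.pd (w, 0) f (z, s) ∂μ = 0 := by
  have hderiv (z : E) : HasFDerivAt (fun z ↦ f (z, s))
      ((fderiv ℝ f (z, s)).comp (.inl ℝ E ℝ)) z :=
    (hf.differentiableAt (one_pos.trans_le hs)).hasFDerivAt.comp z (hasFDerivAt_prodMk_left z s)
  have hpd (z : E) : fderiv ℝ (fun z ↦ f (z, s)) z w = _root_.pd (w, 0) f (z, s) := by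
    rw [(hderiv z).fderiv]
    rfl
  have hint := (hf.pd (w, 0)).integrable_slice μ (by linarith) hs
  have hparts := integral_mul_fderiv_eq_neg_fderiv_mul_of_integrable (μ := μ) (v := w)
    (f := fun _ ↦ (1 : ℝ)) (g := fun z ↦ f (z, s)) (by simp) (by simpa only [hpd, one_mul])
    (by simpa using hf.integrable_slice μ he hs) (by fun_prop)
    (fun z _ ↦ (hderiv z).differentiableAt)
  simpa [hpd] using hparts

lemma setIntegral_pd_horizontal (hf : IsSymbol e f) (he : e < -Module.finrank ℝ E) (w : E) :
    ∫ p in {p : E × ℝ | 1 < p.2}, _root_.pd (w, 0) f p ∂μ.prod volume = 0 := by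
  have hint := (hf.pd (w, 0)).integrableOn_halfSpace μ (by linarith)
  rw [IntegrableOn, restrict_setOf_one_lt_snd] at hint
  rw [restrict_setOf_one_lt_snd, integral_prod_symm _ hint]
  exact setIntegral_eq_zero_of_forall_eq_zero fun s hs ↦
    hf.integral_slice_pd_horizontal μ he w (le_of_lt hs)

lemma setIntegral_pd_vertical (hf : IsSymbol e f) (he : e < -Module.finrank ℝ E) :
    ∫ p in {p : E × ℝ | 1 < p.2}, _root_.pd (0, 1) f p ∂μ.prod volume = -∫ z, f (z, 1) ∂μ := by
  have hint := (hf.pd (0, 1)).integrableOn_halfSpace μ (by linarith)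
  rw [IntegrableOn, restrict_setOf_one_lt_snd] at hint
  rw [restrict_setOf_one_lt_snd, integral_prod _ hint, ← integral_neg]
  have he₀ : e < 0 := he.trans_le (neg_nonpos.2 (Nat.cast_nonneg _))
  exact integral_congr_ae (.of_forall (hf.integral_Ioi_pd_vertical he₀))

end IsSymbol

end Integration

section Energy

/-- The weight `(|z|² + s²)⁻¹` with which the energy identity of a quadrupole is completed to a
sum of squares. -/
def invNormSq {E : Type*} [NormedAddCommGroup E] (p : E × ℝ) : ℝ := (‖p.1‖ ^ 2 + p.2 ^ 2)⁻¹

section InvNormSq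

variable {n : ℕ} {p : Pt n}

lemma invNormSq_eq_axial (n : ℕ) :
    (invNormSq : Pt n → ℝ) = axial (RadialJet.normSqRpow (-1)).val := by
  funext p
  rw [invNormSq, axial, RadialJet.normSqRpow_val, Real.rpow_neg_one]

lemma isSymbol_invNormSq : IsSymbol (-2) (invNormSq : Pt n → ℝ) := by
  rw [invNormSq_eq_axial]
  exact (RadialJet.HasOrder.normSqRpow (-1)).isSymbol.mono (by norm_num)

lemma norm_sq_mul_invNormSq (hp : 0 < p.2) :
    ‖p.1‖ ^ 2 * invNormSq p = 1 - p.2 ^ 2 * invNormSq p := by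
  rw [invNormSq]
  field_simp
  ring

lemma rpow_neg_two_eq_invNormSq_sq (p : Pt n) :
    (‖p.1‖ ^ 2 + p.2 ^ 2) ^ (-2 : ℝ) = invNormSq p ^ 2 := by
  rw [invNormSq, inv_pow, Real.rpow_neg (by positivity), Real.rpow_two]

lemma horizontalEuler_invNormSq (hp : 0 < p.2) :
    horizontalEuler invNormSq p = -2 * ‖p.1‖ ^ 2 * invNormSq p ^ 2 := by
  rw [invNormSq_eq_axial, (RadialJet.HasOrder.normSqRpow (-1)).horizontalEuler_axial hp,
    ← invNormSq_eq_axial, ← rpow_neg_two_eq_invNormSq_sq, axial, RadialJet.normSqRpow_dq]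
  norm_num

lemma pd_et_invNormSq (hp : 0 < p.2) : pd (et n) invNormSq p = -2 * p.2 * invNormSq p ^ 2 := by
  rw [invNormSq_eq_axial, (RadialJet.HasOrder.normSqRpow (-1)).pd_et hp,
    ← invNormSq_eq_axial, ← rpow_neg_two_eq_invNormSq_sq, axial, RadialJet.normSqRpow_ds]
  norm_num

end InvNormSq

/-- The coefficient of `z` in the horizontal part of the vector field whose divergence is `V ΔV`
plus a sum of squares. -/
def horizontalFlux (n : ℕ) (V W : Pt n → ℝ) (p : Pt n) : ℝ :=
  V p * W p + (n + 2) / 2 * (V p * V p * invNormSq p)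

/-- The vertical part of the vector field whose divergence is `V ΔV` plus a sum of squares. -/
def verticalFlux (n : ℕ) (V : Pt n → ℝ) (p : Pt n) : ℝ :=
  V p * pd (et n) V p + (n + 2) * (p.2 * (V p * V p * invNormSq p))

/-- The divergence of the vector field `(z, s) ↦ 2 Y z` on `ℝ^{n-1} × ℝ`. -/
def radialDivergence (n : ℕ) (Y : Pt n → ℝ) (p : Pt n) : ℝ :=
  2 * ∑ i, pd (ez n i) (fun p ↦ p.1 i * Y p) p

lemma radialDivergence_eq {n : ℕ} {Y : Pt n → ℝ} {p : Pt n} (hn : 1 ≤ n)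
    (hY : DifferentiableAt ℝ Y p) :
    radialDivergence n Y p = 2 * (horizontalEuler Y p + (n - 1) * Y p) := by
  have hterm (i : Fin (n - 1)) :
      pd (ez n i) (fun p ↦ p.1 i * Y p) p = Y p + p.1 i * pd (ez n i) Y p := by
    rw [pd_mul (by fun_prop) hY, pd_coord]
    simp [ez]
  simp only [radialDivergence, hterm, Finset.sum_add_distrib, sum_coord_mul_pd_ez,
    Finset.sum_const, Finset.card_univ, Fintype.card_fin, nsmul_eq_mul, Nat.cast_sub hn,
    Nat.cast_one]
  ring

namespace IsQuadrupolePair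

variable {n : ℕ} {e : ℝ} {V W : Pt n → ℝ} {p : Pt n} (h : IsQuadrupolePair n e V W)
include h

lemma isSymbol_sq_mul_invNormSq : IsSymbol (2 * e - 2) fun p ↦ V p * V p * invNormSq p :=
  ((h.isSymbol.mul h.isSymbol).mul isSymbol_invNormSq).mono (by linarith)

lemma isSymbol_horizontalFlux : IsSymbol (2 * e - 2) (horizontalFlux n V W) :=
  ((h.isSymbol.mul h.isSymbol_dq).mono (by linarith)).add (h.isSymbol_sq_mul_invNormSq.const_mul _)

lemma isSymbol_verticalFlux : IsSymbol (2 * e - 1) (verticalFlux n V) :=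
  ((h.isSymbol.mul (h.isSymbol.pd (et n))).mono (by linarith)).add
    (((IsSymbol.snd.mul h.isSymbol_sq_mul_invNormSq).mono (by linarith)).const_mul _)

lemma horizontalEuler_horizontalFlux (hp : 0 < p.2) :
    horizontalEuler (horizontalFlux n V W) p =
      horizontalEuler V p * W p + V p * horizontalEuler W p +
        (n + 2) / 2 * (2 * V p * horizontalEuler V p * invNormSq p -
          2 * ‖p.1‖ ^ 2 * (V p * invNormSq p) ^ 2) := by
  have hV := h.isSymbol.differentiableAt hp
  have hW := h.isSymbol_dq.differentiableAt hp
  have hsq := h.isSymbol_sq_mul_invNormSq.differentiableAt hp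
  refine (pd_add (hV.fun_mul hW) (hsq.const_mul _)).trans ?_
  rw [pd_mul hV hW, pd_const_mul _ hsq,
    pd_mul (hV.fun_mul hV) (isSymbol_invNormSq.differentiableAt hp), pd_mul hV hV]
  rw [← horizontalEuler, ← horizontalEuler, ← horizontalEuler, horizontalEuler_invNormSq hp]
  ring

lemma pd_et_verticalFlux (hp : 0 < p.2) :
    pd (et n) (verticalFlux n V) p =
      pd (et n) V p ^ 2 + V p * pd (et n) (pd (et n) V) p +
        (n + 2) * (V p ^ 2 * invNormSq p + 2 * p.2 * V p * pd (et n) V p * invNormSq p -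
          2 * (p.2 * V p * invNormSq p) ^ 2) := by
  have hV := h.isSymbol.differentiableAt hp
  have hVs := (h.isSymbol.pd (et n)).differentiableAt hp
  have hsq := h.isSymbol_sq_mul_invNormSq.differentiableAt hp
  have hsnd : pd (et n) Prod.snd p = 1 := by simp [pd, et, fderiv_snd]
  refine (pd_add (hV.fun_mul hVs) ((differentiableAt_snd.fun_mul hsq).const_mul _)).trans ?_
  rw [pd_mul hV hVs, pd_const_mul _ (differentiableAt_snd.fun_mul hsq),
    pd_mul differentiableAt_snd hsq,
    pd_mul (hV.fun_mul hV) (isSymbol_invNormSq.differentiableAt hp), pd_mul hV hV, hsnd,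
    pd_et_invNormSq hp]
  ring

lemma mul_lap_eq_divergence_sub_squares (hn : 1 ≤ n) (hp : 0 < p.2) :
    V p * lap n V p =
      radialDivergence n (horizontalFlux n V W) p + pd (et n) (verticalFlux n V) p -
        (4 * ‖p.1‖ ^ 2 * (W p + (n + 2) / 2 * (V p * invNormSq p)) ^ 2 +
          (pd (et n) V p + (n + 2) * (p.2 * V p * invNormSq p)) ^ 2) := by
  rw [radialDivergence_eq hn (h.isSymbol_horizontalFlux.differentiableAt hp),
    h.horizontalEuler_horizontalFlux hp, h.pd_et_verticalFlux hp, h.horizontalEuler_eq p hp,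
    h.lap_eq p hp, horizontalFlux]
  linear_combination
    (n + 2) * (n + 4) * V p ^ 2 * invNormSq p * norm_sq_mul_invNormSq hp

lemma mul_lap_le_divergence (hn : 1 ≤ n) (hp : 0 < p.2) :
    V p * lap n V p ≤
      radialDivergence n (horizontalFlux n V W) p + pd (et n) (verticalFlux n V) p := by
  rw [h.mul_lap_eq_divergence_sub_squares hn hp]
  exact sub_le_self _ (by positivity)

end IsQuadrupolePair

section Divergence

variable {n : ℕ} {e : ℝ} {Y : Pt n → ℝ}

lemma isSymbol_pd_coord_mul (hY : IsSymbol e Y) (i : Fin (n - 1)) :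
    IsSymbol e (pd (ez n i) fun p ↦ p.1 i * Y p) :=
  (((isSymbol_coord i).mul hY).pd (ez n i)).mono (by linarith)

lemma neg_finrank_horizontal (hn : 1 ≤ n) :
    -(Module.finrank ℝ (EuclideanSpace ℝ (Fin (n - 1))) : ℝ) = 1 - n := by
  rw [finrank_euclideanSpace_fin, Nat.cast_sub hn, Nat.cast_one, neg_sub]

lemma IsSymbol.integrableOn_one_lt_snd (hn : 1 ≤ n) (hY : IsSymbol e Y) (he : e < -n) :
    IntegrableOn Y {p | 1 < p.2} :=
  hY.integrableOn_halfSpace volume (by linarith [neg_finrank_horizontal hn])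

lemma setIntegral_radialDivergence (hn : 1 ≤ n) (hY : IsSymbol e Y) (he : e < -n) :
    ∫ p in {p : Pt n | 1 < p.2}, radialDivergence n Y p = 0 := by
  simp only [radialDivergence]
  rw [integral_const_mul, integral_finsetSum _ fun i _ ↦
    (isSymbol_pd_coord_mul hY i).integrableOn_one_lt_snd hn he, Finset.sum_eq_zero, mul_zero]
  exact fun i _ ↦ ((isSymbol_coord i).mul hY).setIntegral_pd_horizontal volume
    (by linarith [neg_finrank_horizontal hn]) _

lemma integrableOn_radialDivergence (hn : 1 ≤ n) (hY : IsSymbol e Y) (he : e < -n) :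
    IntegrableOn (radialDivergence n Y) {p | 1 < p.2} :=
  (integrable_finsetSum _ fun i _ ↦
    (isSymbol_pd_coord_mul hY i).integrableOn_one_lt_snd hn he).const_mul 2

end Divergence

lemma verticalFlux_nonneg {n : ℕ} {V : Pt n → ℝ} {p : Pt n} (hp : p.2 = 1)
    (hV : (‖p.1‖ ^ 2 + 1) * pd (et n) V p + n * V p = 0) : 0 ≤ verticalFlux n V p := by
  have heq : verticalFlux n V p = 2 * V p ^ 2 * invNormSq p := by
    rw [verticalFlux, invNormSq, hp]
    field_simp
    linear_combination V p * hV
  rw [heq, invNormSq]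
  positivity

theorem IsQuadrupolePair.integral_mul_lap_nonpos {n : ℕ} {e : ℝ} {V W : Pt n → ℝ}
    (h : IsQuadrupolePair n e V W) (hn : 1 ≤ n) (he : 2 * e - 2 < -n)
    (hV : ∀ p, p.2 = 1 → (‖p.1‖ ^ 2 + 1) * pd (et n) V p + n * V p = 0) :
    ∫ p in {p | 1 < p.2}, V p * lap n V p ≤ 0 := by
  have hY := h.isSymbol_horizontalFlux
  have hX := h.isSymbol_verticalFlux
  have hlap : IntegrableOn (fun p ↦ V p * lap n V p) {p | 1 < p.2} :=
    ((h.isSymbol.mul h.isSymbol.lap).mono (by linarith)).integrableOn_one_lt_snd hn he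
  have hdivY := integrableOn_radialDivergence hn hY he
  have hdivX : IntegrableOn (pd (et n) (verticalFlux n V)) {p | 1 < p.2} :=
    ((hX.pd (et n)).mono (by linarith)).integrableOn_one_lt_snd hn he
  calc ∫ p in {p | 1 < p.2}, V p * lap n V p
      ≤ ∫ p in {p | 1 < p.2}, (radialDivergence n (horizontalFlux n V W) p +
          pd (et n) (verticalFlux n V) p) :=
        setIntegral_mono_on hlap (hdivY.add hdivX)
          (isOpen_lt continuous_const continuous_snd).measurableSet
          fun p hp ↦ h.mul_lap_le_divergence hn (one_pos.trans hp)
    _ = -∫ z, verticalFlux n V (z, 1) := by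
        rw [integral_add hdivY hdivX, setIntegral_radialDivergence hn hY he, zero_add]
        exact hX.setIntegral_pd_vertical volume (by linarith [neg_finrank_horizontal hn])
    _ ≤ 0 := neg_nonpos.2 (integral_nonneg fun z ↦ verticalFlux_nonneg rfl (hV _ rfl))

end Energy

section RadialMoments

variable {ι : Type*} [Fintype ι] {i j : ι}

lemma integral_comp_linearIsometryEquiv {E : Type*} [NormedAddCommGroup E] [InnerProductSpace ℝ E]
    [FiniteDimensional ℝ E] [MeasurableSpace E] [BorelSpace E] (T : E ≃ₗᵢ[ℝ] E) (f : E → ℝ) :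
    ∫ z, f (T z) = ∫ z, f z :=
  T.measurePreserving.integral_comp T.toHomeomorph.measurableEmbedding f

lemma integral_coord_mul_coord_radial (hij : i ≠ j) (g : ℝ → ℝ) :
    ∫ z : EuclideanSpace ℝ ι, z i * z j * g ‖z‖ = 0 := by
  classical
  let reflection : EuclideanSpace ℝ ι ≃ₗᵢ[ℝ] EuclideanSpace ℝ ι :=
    .piLpCongrRight 2 fun k ↦ if k = i then .neg ℝ else .refl ℝ ℝ
  have hi (z : EuclideanSpace ℝ ι) : reflection z i = -z i := by simp [reflection]
  have hj (z : EuclideanSpace ℝ ι) : reflection z j = z j := by simp [reflection, hij.symm]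
  have hodd := integral_comp_linearIsometryEquiv reflection fun z ↦ z i * z j * g ‖z‖
  simp only [hi, hj, LinearIsometryEquiv.norm_map, neg_mul, integral_neg] at hodd
  linarith

lemma integral_coord_sq_radial (i j : ι) (g : ℝ → ℝ) :
    ∫ z : EuclideanSpace ℝ ι, z i * z i * g ‖z‖ = ∫ z : EuclideanSpace ℝ ι, z j * z j * g ‖z‖ := by
  classical
  let transposition : EuclideanSpace ℝ ι ≃ₗᵢ[ℝ] EuclideanSpace ℝ ι :=
    .piLpCongrLeft 2 ℝ ℝ (Equiv.swap i j)
  have hj (z : EuclideanSpace ℝ ι) : transposition z j = z i := by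
    simp [transposition, Equiv.piCongrLeft']
  simpa only [hj, LinearIsometryEquiv.norm_map] using
    integral_comp_linearIsometryEquiv transposition fun z ↦ z j * z j * g ‖z‖

lemma integral_quadForm_mul_radial {S : ι → ι → ℝ} (hS : ∑ i, S i i = 0) {g : ℝ → ℝ}
    (hg : ∀ i j, Integrable fun z : EuclideanSpace ℝ ι ↦ z i * z j * g ‖z‖) :
    ∫ z : EuclideanSpace ℝ ι, quadForm S z * g ‖z‖ = 0 := by
  have hexpand (z : EuclideanSpace ℝ ι) :
      quadForm S z * g ‖z‖ = ∑ i, ∑ j, S i j * (z i * z j * g ‖z‖) := by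
    simp only [quadForm, Finset.sum_mul, mul_assoc]
  have hdiag (i : ι) : ∫ z : EuclideanSpace ℝ ι, ∑ j, S i j * (z i * z j * g ‖z‖) =
      S i i * ∫ z : EuclideanSpace ℝ ι, z i * z i * g ‖z‖ := by
    rw [integral_finsetSum _ fun j _ ↦ (hg i j).const_mul _]
    simp only [integral_const_mul]
    refine Finset.sum_eq_single i (fun j _ hji ↦ ?_) (by simp)
    rw [integral_coord_mul_coord_radial hji.symm, mul_zero]
  simp only [hexpand]
  rw [integral_finsetSum _ fun i _ ↦ integrable_finsetSum _ fun j _ ↦ (hg i j).const_mul _]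
  simp only [hdiag]
  rcases isEmpty_or_nonempty ι with _ | ⟨⟨i₀⟩⟩
  · exact Finset.sum_of_isEmpty _
  · simp only [integral_coord_sq_radial _ i₀, ← Finset.sum_mul, hS, zero_mul]

namespace RadialJet.HasOrder

variable {n : ℕ} {J : RadialJet} {e : ℝ} {S : Fin (n - 1) → Fin (n - 1) → ℝ} {s : ℝ}
  (hJ : HasOrder (EuclideanSpace ℝ (Fin (n - 1))) J e)
include hJ

lemma integrable_quadrupole (hn : 1 ≤ n) (he : 2 + e < 1 - n) (hs : 1 ≤ s)
    (S : Fin (n - 1) → Fin (n - 1) → ℝ) :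
    Integrable fun z : EuclideanSpace ℝ (Fin (n - 1)) ↦ quadrupole S J.val (z, s) :=
  (hJ.isSymbol_quadrupole S).integrable_slice volume (by rwa [neg_finrank_horizontal hn]) hs

lemma integral_quadrupole (hn : 1 ≤ n) (he : 2 + e < 1 - n) (hs : 1 ≤ s) (hS : ∑ i, S i i = 0) :
    ∫ z : EuclideanSpace ℝ (Fin (n - 1)), quadrupole S J.val (z, s) = 0 :=
  integral_quadForm_mul_radial hS (g := fun r ↦ J.val (r ^ 2) s) fun i j ↦
    (((isSymbol_coord i).mul (isSymbol_coord j)).mul hJ.isSymbol).integrable_slice volume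
      (by linarith [neg_finrank_horizontal hn]) hs

end RadialJet.HasOrder

end RadialMoments

section ClosedHalfSpace

variable {n : ℕ} {p : Pt n} {f : Pt n → ℝ} {e : ℝ}

lemma uniqueDiffOn_closedHalf (n : ℕ) : UniqueDiffOn ℝ (closedHalf n) := by
  refine uniqueDiffOn_convex ((convex_Ici (0 : ℝ)).linear_preimage (LinearMap.snd ℝ _ _)) ?_
  have hsub : {p : Pt n | 0 < p.2} ⊆ closedHalf n := fun p (hp : 0 < p.2) ↦ show 0 ≤ p.2 from hp.le
  exact ⟨et n, interior_maximal hsub isOpen_setOf_snd_pos (one_pos (α := ℝ))⟩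

lemma one_le_snd_add_et (hp : p ∈ closedHalf n) : 1 ≤ (p + et n).2 :=
  le_add_of_nonneg_left hp

lemma one_add_nrm_le (hp : p ∈ closedHalf n) : 1 + nrm n p ≤ 2 * ‖p + et n‖ := by
  have hp₀ : 0 ≤ p.2 := hp
  have hnrm : nrm n p ≤ ‖p.1‖ + p.2 :=
    Real.sqrt_le_iff.2 ⟨by positivity, by nlinarith [norm_nonneg p.1]⟩
  have hfst : ‖p.1‖ ≤ ‖p + et n‖ := by simpa [et] using norm_fst_le (p + et n)
  have hsnd : p.2 + 1 ≤ ‖p + et n‖ := (le_abs_self _).trans (norm_snd_le (p + et n))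
  linarith

lemma IsSymbol.contDiffAt_comp_add_et (hf : IsSymbol e f) (hp : p ∈ closedHalf n) (j : ℕ) :
    ContDiffAt ℝ j (fun p ↦ f (p + et n)) p :=
  (hf.contDiffAt_of_one_le (one_le_snd_add_et hp) j).comp p (by fun_prop)

lemma IsSymbol.norm_iteratedFDerivWithin_comp_add_et_le (hf : IsSymbol e f) (he : e ≤ 0) (j : ℕ) :
    ∃ C, ∀ p ∈ closedHalf n,
      ‖iteratedFDerivWithin ℝ j (fun p ↦ f (p + et n)) (closedHalf n) p‖ ≤
        C * (1 + nrm n p) ^ (e - j) := by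
  obtain ⟨C, hC⟩ := hf.exists_bound j
  refine ⟨|C| * 2 ^ (-(e - j)), fun p hp ↦ ?_⟩
  have hnrm : 0 ≤ nrm n p := Real.sqrt_nonneg _
  rw [iteratedFDerivWithin_eq_iteratedFDeriv (uniqueDiffOn_closedHalf n)
    (hf.contDiffAt_comp_add_et hp j) hp, iteratedFDeriv_comp_add_right]
  calc ‖iteratedFDeriv ℝ j f (p + et n)‖
      ≤ C * ‖p + et n‖ ^ (e - j) := hC _ (one_le_snd_add_et hp)
    _ ≤ |C| * (2 ^ (-(e - j)) * (1 + nrm n p) ^ (e - j)) := by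
        gcongr
        · exact le_abs_self C
        · exact rpow_le_two_rpow_mul (by positivity) (one_add_nrm_le hp)
            (sub_nonpos.2 (he.trans j.cast_nonneg))
    _ = |C| * 2 ^ (-(e - j)) * (1 + nrm n p) ^ (e - j) := by ring

lemma IsSymbol.exists_uniform_decay (hf : IsSymbol e f) (he : e ≤ 0) (N : ℕ) :
    ∃ C > 0, ∀ p ∈ closedHalf n, ∀ j ≤ N,
      ‖iteratedFDerivWithin ℝ j (fun p ↦ f (p + et n)) (closedHalf n) p‖ ≤
        C * (1 + nrm n p) ^ (e - j) := by
  choose C hC using hf.norm_iteratedFDerivWithin_comp_add_et_le he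
  refine ⟨1 + ∑ j ∈ Finset.range (N + 1), |C j|, by positivity, fun p hp j hj ↦
    (hC j p hp).trans ?_⟩
  have hle : |C j| ≤ ∑ j ∈ Finset.range (N + 1), |C j| :=
    Finset.single_le_sum (fun j _ ↦ abs_nonneg (C j)) (Finset.mem_range_succ_iff.2 hj)
  have hnrm : 0 ≤ nrm n p := Real.sqrt_nonneg _
  gcongr
  linarith [le_abs_self (C j)]

lemma setIntegral_upperHalf_comp_add_et (F : Pt n → ℝ) :
    ∫ p in upperHalf n, F (p + et n) = ∫ p in {p | 1 < p.2}, F p := by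
  have hpre : (fun p ↦ p + et n) ⁻¹' {p | 1 < p.2} = upperHalf n := by
    ext p
    simp [upperHalf, et]
  rw [← hpre]
  exact (measurePreserving_add_right (volume.prod volume) (et n)).setIntegral_preimage_emb
    (Homeomorph.addRight (et n)).measurableEmbedding F _

end ClosedHalfSpace

section Solution

variable {n : ℕ} {A : Fin (n - 1) → Fin (n - 1) → Fin (n - 1) → Fin (n - 1) → ℝ}
  {S B : Fin (n - 1) → Fin (n - 1) → ℝ} {p : Pt n}

/-- The sum of the quadrupoles answering the source terms of `S` and `B`, with the vertical
coordinate `s = t + 1` measured from the pole of the bubble. -/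
def potential (n : ℕ) (S B : Fin (n - 1) → Fin (n - 1) → ℝ) (p : Pt n) : ℝ :=
  quadrupole S (RadialJet.traceProfile n).val p + quadrupole B (RadialJet.normalProfile n).val p

lemma exists_isQuadrupolePair_potential (hn : 0 < n) (hS : ∑ i, S i i = 0) (hB : ∑ i, B i i = 0) :
    ∃ W, IsQuadrupolePair n (4 - n) (potential n S B) W := by
  have h := (RadialJet.HasOrder.traceProfile hn).isQuadrupolePair hn hS |>.add <|
    (RadialJet.HasOrder.normalProfile hn).isQuadrupolePair hn hB
  rw [show (2 : ℝ) + (2 - n) = 4 - n by ring] at h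
  exact ⟨_, h⟩

lemma isSymbol_potential (hn : 0 < n) (S B : Fin (n - 1) → Fin (n - 1) → ℝ) :
    IsSymbol (4 - n) (potential n S B) :=
  (((RadialJet.HasOrder.traceProfile hn).isSymbol_quadrupole S).add
    ((RadialJet.HasOrder.normalProfile hn).isSymbol_quadrupole B)).mono (by linarith)

lemma lap_potential (hn : 0 < n) (hS : ∑ i, S i i = 0) (hB : ∑ i, B i i = 0) (hp : 0 < p.2) :
    lap n (potential n S B) p =
      (n - 2) / 3 * (‖p.1‖ ^ 2 + p.2 ^ 2) ^ (-(n / 2) : ℝ) * quadForm S p.1 -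
        n * (n - 2) * (p.2 - 1) ^ 2 * (‖p.1‖ ^ 2 + p.2 ^ 2) ^ (-(n / 2) - 1 : ℝ) *
          quadForm B p.1 := by
  have htrace := RadialJet.HasOrder.traceProfile (E := EuclideanSpace ℝ (Fin (n - 1))) hn
  have hnormal := RadialJet.HasOrder.normalProfile (E := EuclideanSpace ℝ (Fin (n - 1))) hn
  refine ((htrace.isSymbol_quadrupole S).lap_add (hnormal.isSymbol_quadrupole B) hp).trans ?_
  rw [htrace.lap_quadrupole hn hS hp, hnormal.lap_quadrupole hn hB hp, quadrupole, quadrupole,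
    axial, axial, RadialJet.reducedLaplacian_traceProfile hn (by positivity) hp,
    RadialJet.reducedLaplacian_normalProfile hn (by positivity) hp]
  ring

lemma neg_lap_potential_comp_add_et (hn : 0 < n) (hA : ∀ z, quarticForm A z = 0)
    (hA' : ∑ i, ∑ k, A i k i k = 0) (hB : ∑ i, B i i = 0) (hp : 0 < p.2) :
    -lap n (fun p ↦ potential n (partialTrace A) B (p + et n)) p = fAB n A B p := by
  have hp' : 0 < (p + et n).2 := add_pos hp one_pos
  rw [lap_comp_add_right, lap_potential hn (by rwa [sum_partialTrace]) hB hp', fAB_eq hA hB hp]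
  simp only [et, Prod.fst_add, Prod.snd_add, add_zero, add_sub_cancel_right]
  ring

lemma pd_et_potential_robin (hn : 1 < n) (hp : p.2 = 1) :
    (‖p.1‖ ^ 2 + 1) * pd (et n) (potential n S B) p + n * potential n S B p = 0 := by
  have hn₀ : 0 < n := by omega
  have hp₀ : 0 < p.2 := hp ▸ one_pos
  have htrace := RadialJet.HasOrder.traceProfile (E := EuclideanSpace ℝ (Fin (n - 1))) hn₀
  have hnormal := RadialJet.HasOrder.normalProfile (E := EuclideanSpace ℝ (Fin (n - 1))) hn₀
  have hpd : pd (et n) (potential n S B) p =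
      quadrupole S (RadialJet.traceProfile n).ds p +
        quadrupole B (RadialJet.normalProfile n).ds p := by
    rw [← htrace.pd_et_quadrupole hp₀, ← hnormal.pd_et_quadrupole hp₀]
    exact pd_add ((htrace.isSymbol_quadrupole S).differentiableAt hp₀)
      ((hnormal.isSymbol_quadrupole B).differentiableAt hp₀)
  have hS := RadialJet.boundaryOp_traceProfile hn.ne' (sq_nonneg ‖p.1‖)
  have hB := RadialJet.boundaryOp_normalProfile hn.ne' (sq_nonneg ‖p.1‖)
  rw [RadialJet.boundaryOp] at hS hB
  rw [hpd, potential]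
  simp only [quadrupole, axial, hp]
  linear_combination quadForm S p.1 * hS + quadForm B p.1 * hB

lemma stdBubble_boundary_rpow (hn : n ≠ 2) (z : EuclideanSpace ℝ (Fin (n - 1))) (a : ℝ) :
    stdBubble n (z, 0) ^ (a / (n - 2)) = (‖z‖ ^ 2 + 1) ^ (-(a / 2)) := by
  have hn' : (n : ℝ) - 2 ≠ 0 := sub_ne_zero.2 (mod_cast hn)
  rw [stdBubble, ← Real.rpow_mul (by positivity), add_comm]
  congr 1
  · ring
  · field_simp

lemma derivWithin_potential (hn : 2 < n) (z : EuclideanSpace ℝ (Fin (n - 1))) :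
    derivWithin (fun t : ℝ ↦ potential n S B ((z, t) + et n)) (Ici 0) 0 =
      -n * stdBubble n (z, 0) ^ (2 / ((n : ℝ) - 2)) * potential n S B ((z, 0) + et n) := by
  have hsnd : ((z, 0) + et n : Pt n).2 = 1 := zero_add 1
  have hline : HasDerivAt (fun t : ℝ ↦ ((z, t) + et n : Pt n)) (et n) 0 :=
    ((hasDerivAt_const 0 z).prodMk (hasDerivAt_id 0)).add_const (et n)
  have hderiv := ((isSymbol_potential (by omega) S B).differentiableAt
    (hsnd ▸ one_pos)).hasFDerivAt.comp_hasDerivAt (0 : ℝ) hline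
  have hrobin := pd_et_potential_robin (S := S) (B := B) (by omega) hsnd
  refine (hderiv.hasDerivWithinAt.derivWithin (uniqueDiffOn_Ici 0 0 self_mem_Ici)).trans ?_
  rw [← pd, stdBubble_boundary_rpow (by omega), div_self two_ne_zero, Real.rpow_neg_one]
  simp only [et, Prod.fst_add, add_zero] at hrobin ⊢
  field_simp
  linear_combination hrobin

lemma integral_stdBubble_rpow_mul_potential (hn : 3 < n) (hS : ∑ i, S i i = 0)
    (hB : ∑ i, B i i = 0) :
    ∫ z : EuclideanSpace ℝ (Fin (n - 1)),
      stdBubble n (z, 0) ^ ((n : ℝ) / (n - 2)) * potential n S B ((z, 0) + et n) = 0 := by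
  have hn₀ : 0 < n := by omega
  have hn' : (3 : ℝ) < n := mod_cast hn
  set w := RadialJet.normSqRpow (-(n / 2))
  have hw : RadialJet.HasOrder (EuclideanSpace ℝ (Fin (n - 1))) w (2 * -(n / 2)) := .normSqRpow _
  have hS' := hw.mul (.traceProfile hn₀)
  have hB' := hw.mul (.normalProfile hn₀)
  have hexpand (z : EuclideanSpace ℝ (Fin (n - 1))) :
      stdBubble n (z, 0) ^ ((n : ℝ) / (n - 2)) * potential n S B ((z, 0) + et n) =
        quadrupole S (w * RadialJet.traceProfile n).val (z, 1) +
          quadrupole B (w * RadialJet.normalProfile n).val (z, 1) := by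
    rw [stdBubble_boundary_rpow (by omega)]
    simp only [potential, quadrupole, axial, w, RadialJet.mul_val, RadialJet.normSqRpow_val, et,
      Prod.fst_add, Prod.snd_add, add_zero, zero_add, one_pow]
    ring
  have he : 2 + (2 * -(n / 2) + (2 - n)) < 1 - (n : ℝ) := by linarith
  simp only [hexpand]
  rw [integral_add (hS'.integrable_quadrupole hn₀ he le_rfl S)
    (hB'.integrable_quadrupole hn₀ he le_rfl B), hS'.integral_quadrupole hn₀ he le_rfl hS,
    hB'.integral_quadrupole hn₀ he le_rfl hB, add_zero]

lemma integral_potential_mul_lap_nonpos (hn : 7 ≤ n) (hS : ∑ i, S i i = 0) (hB : ∑ i, B i i = 0) :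
    ∫ p in {p | 1 < p.2}, potential n S B p * lap n (potential n S B) p ≤ 0 := by
  obtain ⟨W, hW⟩ := exists_isQuadrupolePair_potential (by omega) hS hB
  have hn' : (7 : ℝ) ≤ n := mod_cast hn
  exact hW.integral_mul_lap_nonpos (by omega) (by linarith) fun p hp ↦
    pd_et_potential_robin (by omega) hp

end Solution

theorem stmt9_general (n : ℕ) (hn : 7 ≤ n)
    (A : Fin (n - 1) → Fin (n - 1) → Fin (n - 1) → Fin (n - 1) → ℝ)
    (B : Fin (n - 1) → Fin (n - 1) → ℝ)
    (hA : ∀ z, quarticForm A z = 0)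
    (hA' : (∑ i : Fin (n - 1), ∑ k : Fin (n - 1), A i k i k) = 0)
    (hB : (∑ i : Fin (n - 1), B i i) = 0) :
    ∃ (C : ℝ) (v : Pt n → ℝ), 0 < C ∧ ContDiffOn ℝ 2 v (closedHalf n) ∧
      (∀ p : Pt n, 0 < p.2 → -(lap n v p) = fAB n A B p) ∧
      (∀ z : EuclideanSpace ℝ (Fin (n - 1)),
        derivWithin (fun t : ℝ ↦ v (z, t)) (Ici (0 : ℝ)) 0 =
          -(n : ℝ) * (stdBubble n (z, 0)) ^ (2 / ((n : ℝ) - 2)) * v (z, 0)) ∧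
      (∀ p ∈ closedHalf n,
        |v p| ≤ C * (1 + nrm n p) ^ ((4 : ℝ) - (n : ℝ)) ∧
        ‖iteratedFDerivWithin ℝ 1 v (closedHalf n) p‖ ≤
          C * (1 + nrm n p) ^ ((3 : ℝ) - (n : ℝ)) ∧
        ‖iteratedFDerivWithin ℝ 2 v (closedHalf n) p‖ ≤
          C * (1 + nrm n p) ^ ((2 : ℝ) - (n : ℝ))) ∧
      (∫ z : EuclideanSpace ℝ (Fin (n - 1)),
        (stdBubble n (z, 0)) ^ ((n : ℝ) / ((n : ℝ) - 2)) * v (z, 0)) = 0 ∧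
      (∫ p in upperHalf n, v p * lap n v p) ≤ 0 := by
  have hn' : (7 : ℝ) ≤ n := mod_cast hn
  have hS : ∑ k, partialTrace A k k = 0 := by rwa [sum_partialTrace]
  have hsymbol := isSymbol_potential (n := n) (by omega) (partialTrace A) B
  obtain ⟨C, hC₀, hC⟩ := hsymbol.exists_uniform_decay (by linarith) 2
  refine ⟨C, fun p ↦ potential n (partialTrace A) B (p + et n), hC₀,
    fun p hp ↦ (hsymbol.contDiffAt_comp_add_et hp 2).contDiffWithinAt,
    fun p hp ↦ neg_lap_potential_comp_add_et (by omega) hA hA' hB hp,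
    derivWithin_potential (by omega), fun p hp ↦ ⟨?_, ?_, ?_⟩,
    integral_stdBubble_rpow_mul_potential (by omega) hS hB, ?_⟩
  · simpa using hC p hp 0 (by norm_num)
  · exact (hC p hp 1 (by norm_num)).trans_eq (by congr 2; push_cast; ring)
  · exact (hC p hp 2 le_rfl).trans_eq (by congr 2; push_cast; ring)
  · simp only [lap_comp_add_right]
    rw [setIntegral_upperHalf_comp_add_et fun p ↦
      potential n (partialTrace A) B p * lap n (potential n (partialTrace A) B) p]
    exact integral_potential_mul_lap_nonpos hn hS hB

end HalfSpaceCorrection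

/-- existence of the correction `v = v_q` solving
`-Δv = f_{A,B}` with the linearized boundary condition, with decay estimates,
orthogonality `∫ U^{n/(n-2)} v(·,0) = 0` and the sign condition `∫ v Δv ≤ 0`. -/
theorem stmt9 (n : ℕ) (hn : 7 ≤ n)
    (A : Fin (n - 1) → Fin (n - 1) → Fin (n - 1) → Fin (n - 1) → ℝ)
    (B : Fin (n - 1) → Fin (n - 1) → ℝ)
    (hA1 : ∀ i k j l, A i k j l = -A k i j l)
    (hA2 : ∀ i k j l, A i k j l = -A i k l j)
    (hA3 : (∑ i : Fin (n - 1), ∑ k : Fin (n - 1), A i k i k) = 0)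
    (hB : (∑ i : Fin (n - 1), B i i) = 0) :
    ∃ (C : ℝ) (v : Pt n → ℝ), 0 < C ∧ ContDiffOn ℝ 2 v (closedHalf n) ∧
      (∀ p : Pt n, 0 < p.2 → -(lap n v p) = fAB n A B p) ∧
      (∀ z : EuclideanSpace ℝ (Fin (n - 1)),
        derivWithin (fun t : ℝ => v (z, t)) (Set.Ici (0 : ℝ)) 0 =
          -(n : ℝ) * (stdBubble n (z, 0)) ^ (2 / ((n : ℝ) - 2)) * v (z, 0)) ∧
      (∀ p ∈ closedHalf n,
        |v p| ≤ C * (1 + nrm n p) ^ ((4 : ℝ) - (n : ℝ)) ∧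
        ‖iteratedFDerivWithin ℝ 1 v (closedHalf n) p‖ ≤
          C * (1 + nrm n p) ^ ((3 : ℝ) - (n : ℝ)) ∧
        ‖iteratedFDerivWithin ℝ 2 v (closedHalf n) p‖ ≤
          C * (1 + nrm n p) ^ ((2 : ℝ) - (n : ℝ))) ∧
      (∫ z : EuclideanSpace ℝ (Fin (n - 1)),
        (stdBubble n (z, 0)) ^ ((n : ℝ) / ((n : ℝ) - 2)) * v (z, 0)) = 0 ∧
      (∫ p in upperHalf n, v p * lap n v p) ≤ 0 :=
  stmt9_general n hn A B (quarticForm_eq_zero hA1) hA3 hB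
end
end

section
/- Let n ≥ 5 be an integer and let A_{ikjl} and B_{ij} (1 ≤ i,j,k,l ≤ n-1) be real constants satisfying A_{ikjl} = -A_{kijl} and A_{ikjl} = -A_{iklj} for all indices, and Σ_{i=1}^{n-1} B_{ii} = 0. Then ∫_{ℝ^n_+} Σ_{i,j=1}^{n-1} ( (1/3) Σ_{k,l=1}^{n-1} A_{ikjl} z_k z_l + B_{ij} t² ) · ∂U/∂z_i (z,t) · ∂U/∂z_j (z,t) dz dt = 0. -/
open MeasureTheory

noncomputable section

/- The antisymmetry of `A` in its first two indices kills `Σ A_{ikjl} z_k z_l z_i z_j` pointwise,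
because `∇_z U` is parallel to `z`. What is left is the quadratic form `B` in `z` against a weight
that is radial in `z`; reflecting one coordinate kills the off-diagonal moments and swapping two
coordinates makes the diagonal ones equal, so the integral is a multiple of the trace of `B`.
The integrand is bounded by a multiple of `((1 + t)² + |z|²)^(2 - n)`, which is integrable on the
`n`-dimensional half-space exactly when `2 (n - 2) > n`, that is `n ≥ 5`. -/

/-- A function of `(z, x)` is radial in `z` if it is invariant under the linear isometries of the
first factor. It is how the weights multiplying `z_i z_j` enter the second moment formula. -/
def IsRadialFst {E X : Type*} [NormedAddCommGroup E] [NormedSpace ℝ E] (w : E × X → ℝ) : Prop :=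
  ∀ (e : E ≃ₗᵢ[ℝ] E) (p : E × X), w (e p.1, p.2) = w p

/-- The squared distance of `(z, t)` to the pole `(0, -1)`, in the Euclidean norm (the norm of the
product type `E × ℝ` is the maximum). The standard bubble is a power of it. -/
def sqDistPole {E : Type*} [NormedAddCommGroup E] (p : E × ℝ) : ℝ :=
  (1 + p.2) ^ 2 + ‖p.1‖ ^ 2

/-- The integrand of the theorem: the second-order part
`(1/3) Σ_{k,l} A_{ikjl} z_k z_l + B_{ij} t²` of an inverse metric in Fermi coordinates, evaluated
on the horizontal gradient of the bubble. -/
def fermiEnergyDensity (n : ℕ) (A : Fin (n - 1) → Fin (n - 1) → Fin (n - 1) → Fin (n - 1) → ℝ)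
    (B : Fin (n - 1) → Fin (n - 1) → ℝ) (p : Pt n) : ℝ :=
  ∑ i, ∑ j, ((1 / 3) * (∑ k, ∑ l, A i k j l * p.1 k * p.1 l) + B i j * p.2 ^ 2) *
    (pd (ez n i) (stdBubble n) p * pd (ez n j) (stdBubble n) p)

section Antisymmetry

theorem sum_sum_eq_zero_of_antisymm {ι M : Type*} [Fintype ι] [AddCommGroup M]
    [IsAddTorsionFree M] {f : ι → ι → M} (hf : ∀ i k, f i k = -f k i) :
    ∑ i, ∑ k, f i k = 0 := by
  refine self_eq_neg.mp ?_
  calc ∑ i, ∑ k, f i k = ∑ k, ∑ i, f i k := Finset.sum_comm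
    _ = -∑ k, ∑ i, f k i := by
      simp only [← Finset.sum_neg_distrib]
      exact Finset.sum_congr rfl fun k _ => Finset.sum_congr rfl fun i _ => hf i k

theorem quartic_form_eq_zero_of_antisymm {ι R : Type*} [Fintype ι] [CommRing R] [IsAddTorsionFree R]
    {A : ι → ι → ι → ι → R} (hA : ∀ i k j l, A i k j l = -A k i j l) (z : ι → R) :
    ∑ i, ∑ j, (∑ k, ∑ l, A i k j l * z k * z l) * (z i * z j) = 0 := by
  calc ∑ i, ∑ j, (∑ k, ∑ l, A i k j l * z k * z l) * (z i * z j)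
      = ∑ i, ∑ k, ∑ j, ∑ l, A i k j l * z k * z l * (z i * z j) := by
        simp only [Finset.sum_mul]
        exact Finset.sum_congr rfl fun i _ => Finset.sum_comm
    _ = 0 := sum_sum_eq_zero_of_antisymm fun i k => by
        simp only [← Finset.sum_neg_distrib]
        refine Finset.sum_congr rfl fun j _ => Finset.sum_congr rfl fun l _ => ?_
        rw [hA i k j l]
        ring

end Antisymmetry

section SecondMoments

theorem integral_comp_linearIsometryEquiv_fst {E X F : Type*} [NormedAddCommGroup E]
    [InnerProductSpace ℝ E] [FiniteDimensional ℝ E] [MeasurableSpace E] [BorelSpace E]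
    [MeasurableSpace X] {ν : Measure X} [SFinite ν] [NormedAddCommGroup F] [NormedSpace ℝ F]
    (e : E ≃ₗᵢ[ℝ] E) (f : E × X → F) :
    ∫ p, f (e p.1, p.2) ∂(volume.prod ν) = ∫ p, f p ∂(volume.prod ν) :=
  (e.measurePreserving.prod (.id ν)).integral_comp
    (e.toMeasurableEquiv.prodCongr (.refl X)).measurableEmbedding f

variable {ι X : Type*} [Fintype ι] [MeasurableSpace X] {ν : Measure X} [SFinite ν]
  {w : EuclideanSpace ℝ ι × X → ℝ}

theorem integral_radial_mul_coord_mul_coord_of_ne (hw : IsRadialFst w) {i j : ι} (hij : i ≠ j) :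
    ∫ p, w p * (p.1 i * p.1 j) ∂(volume.prod ν) = 0 := by
  classical
  let flip : EuclideanSpace ℝ ι ≃ₗᵢ[ℝ] EuclideanSpace ℝ ι :=
    .piLpCongrRight 2 fun k => if k = i then .neg ℝ else .refl ℝ ℝ
  have hflip (z : EuclideanSpace ℝ ι) : flip z i * flip z j = -(z i * z j) := by
    simp [flip, hij.symm]
  refine self_eq_neg.mp ?_
  rw [← integral_neg, ← integral_comp_linearIsometryEquiv_fst flip]
  simp only [hw flip, hflip, mul_neg]

theorem integral_radial_mul_coord_sq_eq (hw : IsRadialFst w) (i j : ι) :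
    ∫ p, w p * p.1 i ^ 2 ∂(volume.prod ν) = ∫ p, w p * p.1 j ^ 2 ∂(volume.prod ν) := by
  classical
  let swap : EuclideanSpace ℝ ι ≃ₗᵢ[ℝ] EuclideanSpace ℝ ι := .piLpCongrLeft 2 ℝ ℝ (.swap i j)
  have hswap (z : EuclideanSpace ℝ ι) : swap z i = z j := by
    simp [swap, LinearIsometryEquiv.piLpCongrLeft_apply, Equiv.piCongrLeft']
  rw [← integral_comp_linearIsometryEquiv_fst swap]
  simp only [hw swap, hswap]

theorem integrable_mul_coord_mul_coord {μ : Measure (EuclideanSpace ℝ ι × X)}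
    (hint : Integrable (fun p => w p * ‖p.1‖ ^ 2) μ) (i j : ι) :
    Integrable (fun p => w p * (p.1 i * p.1 j)) μ := by
  have hbound (z : EuclideanSpace ℝ ι) : ‖z i * z j / ‖z‖ ^ 2‖ ≤ 1 := by
    rw [norm_div, norm_mul, norm_pow, norm_norm, sq]
    exact div_le_one_of_le₀ (mul_le_mul (PiLp.norm_apply_le z i) (PiLp.norm_apply_le z j)
      (norm_nonneg _) (norm_nonneg _)) (by positivity)
  refine (hint.bdd_mul (f := fun p => p.1 i * p.1 j / ‖p.1‖ ^ 2) (c := 1)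
    (Measurable.aestronglyMeasurable (by fun_prop)) (ae_of_all _ fun p => hbound p.1)).congr
    (ae_of_all _ fun p => ?_)
  rcases eq_or_ne p.1 0 with hz | hz
  · simp [hz]
  · have : ‖p.1‖ ≠ 0 := norm_ne_zero_iff.mpr hz
    field_simp

theorem integral_radial_mul_coord_sq (hw : IsRadialFst w)
    (hint : Integrable (fun p => w p * ‖p.1‖ ^ 2) (volume.prod ν)) (i : ι) :
    ∫ p, w p * p.1 i ^ 2 ∂(volume.prod ν) =
      (∫ p, w p * ‖p.1‖ ^ 2 ∂(volume.prod ν)) / Fintype.card ι := by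
  have : Nonempty ι := ⟨i⟩
  rw [eq_div_iff (by simp)]
  symm
  calc ∫ p, w p * ‖p.1‖ ^ 2 ∂(volume.prod ν)
      = ∫ p, ∑ j, w p * p.1 j ^ 2 ∂(volume.prod ν) := by
        simp only [EuclideanSpace.real_norm_sq_eq, Finset.mul_sum]
    _ = ∑ j, ∫ p, w p * p.1 j ^ 2 ∂(volume.prod ν) :=
        integral_finsetSum _ fun j _ => by
          simpa only [sq] using integrable_mul_coord_mul_coord hint j j
    _ = ∑ _j : ι, ∫ p, w p * p.1 i ^ 2 ∂(volume.prod ν) :=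
        Finset.sum_congr rfl fun j _ => integral_radial_mul_coord_sq_eq hw j i
    _ = (∫ p, w p * p.1 i ^ 2 ∂(volume.prod ν)) * Fintype.card ι := by
        simp [mul_comm]

theorem integral_radial_mul_quadratic_form (hw : IsRadialFst w)
    (hint : Integrable (fun p => w p * ‖p.1‖ ^ 2) (volume.prod ν)) (B : ι → ι → ℝ) :
    ∫ p, w p * ∑ i, ∑ j, B i j * (p.1 i * p.1 j) ∂(volume.prod ν) =
      (∑ i, B i i) / Fintype.card ι * ∫ p, w p * ‖p.1‖ ^ 2 ∂(volume.prod ν) := by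
  have hterm (i j : ι) : Integrable (fun p => B i j * (w p * (p.1 i * p.1 j))) (volume.prod ν) :=
    (integrable_mul_coord_mul_coord hint i j).const_mul _
  calc ∫ p, w p * ∑ i, ∑ j, B i j * (p.1 i * p.1 j) ∂(volume.prod ν)
      = ∫ p, ∑ i, ∑ j, B i j * (w p * (p.1 i * p.1 j)) ∂(volume.prod ν) := by
        simp only [Finset.mul_sum, mul_left_comm]
    _ = ∑ i, ∑ j, B i j * ∫ p, w p * (p.1 i * p.1 j) ∂(volume.prod ν) := by
        rw [integral_finsetSum _ fun i _ => integrable_finsetSum _ fun j _ => hterm i j]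
        refine Finset.sum_congr rfl fun i _ => ?_
        rw [integral_finsetSum _ fun j _ => hterm i j]
        simp only [integral_const_mul]
    _ = ∑ i, B i i * ∫ p, w p * p.1 i ^ 2 ∂(volume.prod ν) := by
        refine Finset.sum_congr rfl fun i _ => ?_
        rw [Fintype.sum_eq_single i fun j hj => by
          rw [integral_radial_mul_coord_mul_coord_of_ne hw hj.symm, mul_zero]]
        simp only [sq]
    _ = (∑ i, B i i) / Fintype.card ι * ∫ p, w p * ‖p.1‖ ^ 2 ∂(volume.prod ν) := by
        simp only [integral_radial_mul_coord_sq hw hint, ← Finset.sum_mul]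
        ring

theorem integrable_mul_quadratic_form {μ : Measure (EuclideanSpace ℝ ι × X)}
    (hint : Integrable (fun p => w p * ‖p.1‖ ^ 2) μ) (B : ι → ι → ℝ) :
    Integrable (fun p => w p * ∑ i, ∑ j, B i j * (p.1 i * p.1 j)) μ := by
  simp only [Finset.mul_sum, mul_left_comm (w _) (B _ _)]
  exact integrable_finsetSum _ fun i _ => integrable_finsetSum _ fun j _ =>
    (integrable_mul_coord_mul_coord hint i j).const_mul _

end SecondMoments

section SqDistPole

variable {E : Type*} [NormedAddCommGroup E]

theorem sqDistPole_pos {p : E × ℝ} (hp : 0 < p.2) : 0 < sqDistPole p := by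
  unfold sqDistPole
  positivity

theorem one_add_norm_sq_le_sqDistPole {p : E × ℝ} (hp : 0 < p.2) : 1 + ‖p‖ ^ 2 ≤ sqDistPole p := by
  unfold sqDistPole
  rcases max_choice ‖p.1‖ ‖p.2‖ with h | h <;> rw [Prod.norm_def, h]
  · nlinarith
  · rw [Real.norm_of_nonneg hp.le]
    nlinarith [sq_nonneg ‖p.1‖]

theorem sq_mul_norm_sq_le_sqDistPole_sq {p : E × ℝ} (hp : 0 < p.2) :
    p.2 ^ 2 * ‖p.1‖ ^ 2 ≤ sqDistPole p ^ 2 := by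
  rw [sq (sqDistPole p)]
  unfold sqDistPole
  gcongr
  · nlinarith [sq_nonneg ‖p.1‖]
  · nlinarith [sq_nonneg (1 + p.2)]

theorem isRadialFst_mul_sqDistPole_rpow [NormedSpace ℝ E] (g : ℝ → ℝ) (s : ℝ) :
    IsRadialFst fun p : E × ℝ => g p.2 * sqDistPole p ^ s := fun e p => by
  simp only [sqDistPole, e.norm_map]

theorem pd_sqDistPole_rpow [InnerProductSpace ℝ E] {p : E × ℝ} (hp : sqDistPole p ≠ 0) (s : ℝ)
    (v : E) :
    pd (v, 0) (fun q : E × ℝ => sqDistPole q ^ s) p =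
      2 * s * sqDistPole p ^ (s - 1) * inner ℝ p.1 v := by
  have hderiv : HasFDerivAt (fun q : E × ℝ => sqDistPole q ^ s) _ p :=
    (((hasFDerivAt_snd.const_add 1).pow 2).add hasFDerivAt_fst.norm_sq).rpow_const (Or.inl hp)
  rw [pd, hderiv.fderiv]
  simp only [sqDistPole, Pi.add_apply, Nat.add_one_sub_one, pow_one, smul_add, nsmul_eq_mul,
    Nat.cast_ofNat, mul_one, add_apply, smul_apply, ContinuousLinearMap.coe_snd', smul_eq_mul,
    mul_zero, ContinuousLinearMap.comp_apply, ContinuousLinearMap.coe_fst', coe_innerSL_apply,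
    zero_add]
  ring

variable [NormedSpace ℝ E] [FiniteDimensional ℝ E] [MeasurableSpace E] [BorelSpace E]

theorem integrableOn_sqDistPole_rpow {μ : Measure (E × ℝ)} [μ.IsAddHaarMeasure] {r : ℝ}
    (hr : (Module.finrank ℝ (E × ℝ) : ℝ) < r) :
    IntegrableOn (fun p => sqDistPole p ^ (-r / 2)) {p : E × ℝ | 0 < p.2} μ := by
  have hr0 : 0 < r := (Nat.cast_nonneg _).trans_lt hr
  refine (integrable_rpow_neg_one_add_norm_sq (μ := μ) hr).integrableOn.mono'
    (Measurable.aestronglyMeasurable (by unfold sqDistPole; fun_prop))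
    (ae_restrict_of_forall_mem (measurableSet_lt (by fun_prop) (by fun_prop)) fun p hp => ?_)
  rw [Real.norm_of_nonneg (Real.rpow_nonneg (sqDistPole_pos hp).le _)]
  exact Real.rpow_le_rpow_of_nonpos (by positivity) (one_add_norm_sq_le_sqDistPole hp)
    (div_nonpos_of_nonpos_of_nonneg (neg_nonpos.mpr hr0.le) zero_le_two)

theorem integrableOn_sq_mul_sqDistPole_rpow_mul_norm_sq {μ : Measure (E × ℝ)}
    [μ.IsAddHaarMeasure] {r : ℝ} (hr : Module.finrank ℝ (E × ℝ) + 4 < 2 * r) :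
    IntegrableOn (fun p => p.2 ^ 2 * sqDistPole p ^ (-r) * ‖p.1‖ ^ 2) {p : E × ℝ | 0 < p.2} μ := by
  have hr' : (Module.finrank ℝ (E × ℝ) : ℝ) < 2 * r - 4 := by linarith
  refine (integrableOn_sqDistPole_rpow (μ := μ) hr').mono'
    (Measurable.aestronglyMeasurable (by unfold sqDistPole; fun_prop))
    (ae_restrict_of_forall_mem (measurableSet_lt (by fun_prop) (by fun_prop)) fun p hp => ?_)
  have hD : 0 < sqDistPole p := sqDistPole_pos hp
  rw [Real.norm_of_nonneg (by positivity)]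
  calc p.2 ^ 2 * sqDistPole p ^ (-r) * ‖p.1‖ ^ 2
      = p.2 ^ 2 * ‖p.1‖ ^ 2 * sqDistPole p ^ (-r) := mul_right_comm _ _ _
    _ ≤ sqDistPole p ^ 2 * sqDistPole p ^ (-r) := by
        gcongr
        exact sq_mul_norm_sq_le_sqDistPole_sq hp
    _ = sqDistPole p ^ (-(2 * r - 4) / 2) := by
        rw [← Real.rpow_natCast, ← Real.rpow_add hD]
        congr 1
        push_cast
        ring

end SqDistPole

section StdBubble

variable {n : ℕ}

theorem measurableSet_upperHalf : MeasurableSet (upperHalf n) :=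
  measurableSet_lt measurable_const measurable_snd

theorem volume_restrict_upperHalf :
    (volume : Measure (Pt n)).restrict (upperHalf n) =
      volume.prod (volume.restrict (Set.Ioi 0)) := by
  have hprod : upperHalf n = Set.univ ×ˢ Set.Ioi 0 := by
    ext p
    simp [upperHalf]
  rw [hprod, Measure.volume_eq_prod, ← Measure.prod_restrict, Measure.restrict_univ]

theorem integrableOn_upperHalf_sq_mul_sqDistPole_rpow_mul_norm_sq (hn : 5 ≤ n) :
    IntegrableOn (fun p : Pt n => p.2 ^ 2 * sqDistPole p ^ (-(n : ℝ)) * ‖p.1‖ ^ 2)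
      (upperHalf n) := by
  have : (volume : Measure (Pt n)).IsAddHaarMeasure := Measure.prod.instIsAddHaarMeasure _ _
  have hdim : Module.finrank ℝ (Pt n) = n := by
    rw [Module.finrank_prod, finrank_euclideanSpace_fin, Module.finrank_self]
    lia
  refine integrableOn_sq_mul_sqDistPole_rpow_mul_norm_sq ?_
  rw [hdim]
  exact_mod_cast (by lia : n + 4 < 2 * n)

theorem pd_stdBubble {p : Pt n} (hp : p ∈ upperHalf n) (i : Fin (n - 1)) :
    pd (ez n i) (stdBubble n) p =
      -((n : ℝ) - 2) * sqDistPole p ^ (-(n : ℝ) / 2) * p.1 i := by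
  refine (pd_sqDistPole_rpow (sqDistPole_pos hp).ne' _ _).trans ?_
  rw [EuclideanSpace.inner_single_right, conj_trivial,
    show -(((n : ℝ) - 2) / 2) - 1 = -(n : ℝ) / 2 by ring]
  ring

theorem pd_stdBubble_mul_pd_stdBubble {p : Pt n} (hp : p ∈ upperHalf n) (i j : Fin (n - 1)) :
    pd (ez n i) (stdBubble n) p * pd (ez n j) (stdBubble n) p =
      ((n : ℝ) - 2) ^ 2 * sqDistPole p ^ (-(n : ℝ)) * (p.1 i * p.1 j) := by
  have hpow : sqDistPole p ^ (-(n : ℝ)) =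
      sqDistPole p ^ (-(n : ℝ) / 2) * sqDistPole p ^ (-(n : ℝ) / 2) := by
    rw [← Real.rpow_add (sqDistPole_pos hp), add_halves]
  rw [pd_stdBubble hp, pd_stdBubble hp, hpow]
  ring

theorem sum_pd_stdBubble_sq {p : Pt n} (hp : p ∈ upperHalf n) :
    ∑ i, pd (ez n i) (stdBubble n) p ^ 2 =
      ((n : ℝ) - 2) ^ 2 * sqDistPole p ^ (-(n : ℝ)) * ‖p.1‖ ^ 2 := by
  simp only [sq (pd _ _ _), pd_stdBubble_mul_pd_stdBubble hp, EuclideanSpace.real_norm_sq_eq,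
    Finset.mul_sum, sq (p.1 _)]

theorem fermiEnergyDensity_eq {A : Fin (n - 1) → Fin (n - 1) → Fin (n - 1) → Fin (n - 1) → ℝ}
    (hA : ∀ i k j l, A i k j l = -A k i j l) (B : Fin (n - 1) → Fin (n - 1) → ℝ)
    {p : Pt n} (hp : p ∈ upperHalf n) :
    fermiEnergyDensity n A B p = ((n : ℝ) - 2) ^ 2 *
      (p.2 ^ 2 * sqDistPole p ^ (-(n : ℝ)) * ∑ i, ∑ j, B i j * (p.1 i * p.1 j)) := by
  set c := ((n : ℝ) - 2) ^ 2 * sqDistPole p ^ (-(n : ℝ)) with hc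
  have hsplit (i j : Fin (n - 1)) (a : ℝ) :
      (1 / 3 * a + B i j * p.2 ^ 2) * (c * (p.1 i * p.1 j)) =
        1 / 3 * c * (a * (p.1 i * p.1 j)) + p.2 ^ 2 * c * (B i j * (p.1 i * p.1 j)) := by
    ring
  simp only [fermiEnergyDensity, pd_stdBubble_mul_pd_stdBubble hp, ← hc, hsplit,
    Finset.sum_add_distrib, ← Finset.mul_sum, quartic_form_eq_zero_of_antisymm hA]
  rw [hc]
  ring

end StdBubble

theorem stmt10_general (n : ℕ) (hn : 5 ≤ n)
    (A : Fin (n - 1) → Fin (n - 1) → Fin (n - 1) → Fin (n - 1) → ℝ)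
    (B : Fin (n - 1) → Fin (n - 1) → ℝ)
    (hA : ∀ i k j l, A i k j l = -A k i j l) :
    IntegrableOn (fermiEnergyDensity n A B) (upperHalf n) ∧
      ∫ p in upperHalf n, fermiEnergyDensity n A B p =
        (∑ i, B i i) / ((n : ℝ) - 1) *
          ∫ p in upperHalf n, p.2 ^ 2 * ∑ i, pd (ez n i) (stdBubble n) p ^ 2 := by
  let w (p : Pt n) : ℝ := p.2 ^ 2 * sqDistPole p ^ (-(n : ℝ))
  have hw : IsRadialFst w := isRadialFst_mul_sqDistPole_rpow (· ^ 2) _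
  have hcard : ((n - 1 : ℕ) : ℝ) = n - 1 := by rw [Nat.cast_sub (by lia), Nat.cast_one]
  have hdensity : Set.EqOn (fermiEnergyDensity n A B)
      (fun p => ((n : ℝ) - 2) ^ 2 * (w p * ∑ i, ∑ j, B i j * (p.1 i * p.1 j))) (upperHalf n) :=
    fun _ => fermiEnergyDensity_eq hA B
  have hgradient : Set.EqOn (fun p => p.2 ^ 2 * ∑ i, pd (ez n i) (stdBubble n) p ^ 2)
      (fun p => ((n : ℝ) - 2) ^ 2 * (w p * ‖p.1‖ ^ 2)) (upperHalf n) := fun p hp => by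
    simp only [sum_pd_stdBubble_sq hp, w]
    ring
  have hint : IntegrableOn (fun p => w p * ‖p.1‖ ^ 2) (upperHalf n) :=
    integrableOn_upperHalf_sq_mul_sqDistPole_rpow_mul_norm_sq hn
  refine ⟨IntegrableOn.congr_fun ((integrable_mul_quadratic_form hint B).const_mul _)
    hdensity.symm measurableSet_upperHalf, ?_⟩
  rw [IntegrableOn, volume_restrict_upperHalf] at hint
  rw [setIntegral_congr_fun measurableSet_upperHalf hdensity,
    setIntegral_congr_fun measurableSet_upperHalf hgradient, volume_restrict_upperHalf,
    integral_const_mul, integral_const_mul, integral_radial_mul_quadratic_form hw hint,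
    Fintype.card_fin, hcard]
  ring

/-- under antisymmetry of `A` and tracelessness of `B`,
`∫_{ℝ^n_+} Σ_{i,j} ((1/3) Σ_{k,l} A_{ikjl} z_k z_l + B_{ij} t²) ∂U/∂z_i ∂U/∂z_j = 0`. -/
theorem stmt10 (n : ℕ) (hn : 5 ≤ n)
    (A : Fin (n - 1) → Fin (n - 1) → Fin (n - 1) → Fin (n - 1) → ℝ)
    (B : Fin (n - 1) → Fin (n - 1) → ℝ)
    (hA1 : ∀ i k j l, A i k j l = -A k i j l)
    (hA2 : ∀ i k j l, A i k j l = -A i k l j)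
    (hB : (∑ i : Fin (n - 1), B i i) = 0) :
    (∫ p in upperHalf n,
      ∑ i : Fin (n - 1), ∑ j : Fin (n - 1),
        ((1 / 3) * (∑ k : Fin (n - 1), ∑ l : Fin (n - 1), A i k j l * p.1 k * p.1 l) +
            B i j * p.2 ^ 2) *
          (pd (ez n i) (stdBubble n) p * pd (ez n j) (stdBubble n) p)) = 0 := by
  refine (stmt10_general n hn A B hA1).2.trans ?_
  rw [hB, zero_div, zero_mul]
end
end
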